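/- arXiv:2007.10864 — 2 statements merged into one kernel-verified Lean document; each statement's English description precedes it below -/
import Mathlib

section
/- Let (X,d,μ) be a space of homogeneous type, let p(·) be an exponent function with p(·) ∈ LH, and let w ∈ A_{p(·)}. Define W(x) = w(x)^{p(x)}. Then there exists a constant C such that for every quasi-metric ball B and every measurable set E ⊆ B, μ(E)/μ(B) ≤ C (W(E)/W(B))^{1/p₊}, where W(S) = ∫_S w(x)^{p(x)} dμ. In particular W ∈ A_∞. -/
open MeasureTheory ENNReal NNReal Filter

namespace SHT

variable {X : Type*} [MeasurableSpace X]

/-- The quasi-metric ball `B(x,r) = {y | d x y < r}`. -/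
def ball (d : X → X → ℝ) (x : X) (r : ℝ) : Set X := {y | d x y < r}

/-- `(X, d, μ)` is a space of homogeneous type with quasi-metric constant `A₀`
and doubling constant `Cμ`. -/
structure IsSHT (d : X → X → ℝ) (μ : Measure X) (A₀ Cμ : ℝ) : Prop where
  d_nonneg : ∀ x y, 0 ≤ d x y
  d_eq_zero_iff : ∀ x y, d x y = 0 ↔ x = y
  d_symm : ∀ x y, d x y = d y x
  one_le_A₀ : 1 ≤ A₀
  d_triangle : ∀ x y z, d x y ≤ A₀ * (d x z + d z y)
  one_le_Cμ : 1 ≤ Cμ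
  measurableSet_ball : ∀ x r, MeasurableSet (ball d x r)
  ball_pos : ∀ x r, 0 < r → 0 < μ (ball d x r)
  ball_ne_top : ∀ x r, 0 < r → μ (ball d x r) ≠ ⊤
  doubling : ∀ x r, 0 < r → μ (ball d x (2 * r)) ≤ ENNReal.ofReal Cμ * μ (ball d x r)

/-- The modular `ρ_{p(·)}(f) = ∫_{X ∖ X_∞} f(x)^{p(x)} dμ + ‖f‖_{L^∞(X_∞)}`
for an (extended-real valued) exponent `p` and a nonnegative function `f`. -/
noncomputable def modular (μ : Measure X) (p : X → ℝ≥0∞) (f : X → ℝ≥0∞) : ℝ≥0∞ :=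
  (∫⁻ x in {x | p x ≠ ⊤}, f x ^ (p x).toReal ∂μ) + essSup f (μ.restrict {x | p x = ⊤})

/-- The Luxemburg norm `‖f‖_{p(·)} = inf {λ > 0 | ρ_{p(·)}(f/λ) ≤ 1}`. -/
noncomputable def luxNorm (μ : Measure X) (p : X → ℝ≥0∞) (f : X → ℝ≥0∞) : ℝ≥0∞ :=
  sInf {lam : ℝ≥0∞ | 0 < lam ∧ modular μ p (fun x => f x / lam) ≤ 1}

/-- The pointwise conjugate exponent `p'(x) = p(x)/(p(x)-1)`, with the conventions
`p'(x) = ∞` if `p(x) = 1` and `p'(x) = 1` if `p(x) = ∞`. -/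
noncomputable def conjExp (p : X → ℝ≥0∞) : X → ℝ≥0∞ := fun x =>
  if p x = ⊤ then 1 else p x / (p x - 1)

/-- A real-valued exponent function viewed as an extended-real valued one. -/
noncomputable def ofRealExp (p : X → ℝ) : X → ℝ≥0∞ := fun x => ENNReal.ofReal (p x)

/-- Local log-Hölder continuity of an exponent function. -/
def LH0 (d : X → X → ℝ) (p : X → ℝ) : Prop :=
  ∃ C₀ : ℝ, 0 < C₀ ∧ ∀ x y, 0 < d x y → d x y < 1 / 2 →
    |p x - p y| ≤ C₀ / (-Real.log (d x y))

/-- Log-Hölder continuity at infinity, with respect to the base point `x₀`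
and with limit value `pinf`. -/
def LHinf (d : X → X → ℝ) (x₀ : X) (p : X → ℝ) (pinf : ℝ) : Prop :=
  ∃ Cinf : ℝ, 0 < Cinf ∧ ∀ x, |p x - pinf| ≤ Cinf / Real.log (Real.exp 1 + d x x₀)

/-- Global log-Hölder continuity. -/
def LH (d : X → X → ℝ) (x₀ : X) (p : X → ℝ) : Prop :=
  LH0 d p ∧ ∃ pinf : ℝ, LHinf d x₀ p pinf

/-- `w` is a weight: measurable, positive and finite a.e., and locally integrable. -/
def IsWeight (d : X → X → ℝ) (μ : Measure X) (w : X → ℝ≥0∞) : Prop :=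
  Measurable w ∧ (∀ᵐ x ∂μ, 0 < w x ∧ w x < ⊤) ∧
    ∀ (x : X) (r : ℝ), 0 < r → (∫⁻ y in ball d x r, w y ∂μ) ≠ ⊤

/-- The variable Muckenhoupt condition `w ∈ A_{p(·)}`:
`‖w χ_B‖_{p(·)} ‖w⁻¹ χ_B‖_{p'(·)} ≤ K μ(B)` for all quasi-metric balls `B`. -/
def Apvar (d : X → X → ℝ) (μ : Measure X) (p : X → ℝ≥0∞) (w : X → ℝ≥0∞) : Prop :=
  ∃ K : ℝ≥0, ∀ (x : X) (r : ℝ), 0 < r →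
    luxNorm μ p ((ball d x r).indicator w) *
      luxNorm μ (conjExp p) ((ball d x r).indicator fun y => (w y)⁻¹) ≤ K * μ (ball d x r)

/-- The uncentered Hardy–Littlewood maximal operator over quasi-metric balls. -/
noncomputable def maximal (d : X → X → ℝ) (μ : Measure X) (f : X → ℝ≥0∞) (x : X) : ℝ≥0∞ :=
  ⨆ (z : X) (r : ℝ) (_ : 0 < r ∧ x ∈ ball d z r),
    (μ (ball d z r))⁻¹ * ∫⁻ y in ball d z r, f y ∂μ

/-- `f ∈ L^{p(·)}`: the modular of `f/λ` is finite for some `λ > 0`. -/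
def MemLpvar (μ : Measure X) (p : X → ℝ≥0∞) (f : X → ℝ≥0∞) : Prop :=
  ∃ lam : ℝ≥0∞, 0 < lam ∧ modular μ p (fun x => f x / lam) < ⊤


/-- The Muckenhoupt `A_∞` condition for a weight `W` (with respect to `μ` and the
quasi-metric `d`): for some `ε > 0` and `C > 1`, `μ(E)/μ(B) ≤ C (W(E)/W(B))^ε`
for every ball `B` and measurable `E ⊆ B`. -/
def AInfty (d : X → X → ℝ) (μ : Measure X) (W : X → ℝ≥0∞) : Prop :=
  ∃ ε : ℝ, 0 < ε ∧ ∃ C : ℝ≥0, 1 < C ∧ ∀ (z : X) (rad : ℝ), 0 < rad →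
    ∀ E ⊆ ball d z rad, MeasurableSet E →
      μ E / μ (ball d z rad) ≤
        C * ((∫⁻ x in E, W x ∂μ) / ∫⁻ x in ball d z rad, W x ∂μ) ^ ε


lemma modular_ofRealExp (μ : Measure X) (p : X → ℝ) (hp : ∀ x, 1 ≤ p x) (f : X → ℝ≥0∞) :
    modular μ (ofRealExp p) f = ∫⁻ x, f x ^ p x ∂μ := by
  unfold modular ofRealExp
  have h1 : {x | ENNReal.ofReal (p x) = ⊤} = ∅ := by ext x; simp
  have h2 : {x | ENNReal.ofReal (p x) ≠ ⊤} = Set.univ := by ext x; simp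
  rw [h1, h2]
  simp only [Measure.restrict_empty, essSup_measure_zero, Measure.restrict_univ]
  rw [show (⊥ : ℝ≥0∞) = 0 from rfl, add_zero]
  refine lintegral_congr fun x => ?_
  rw [ENNReal.toReal_ofReal (by linarith [hp x])]

lemma conj_one (p : X → ℝ) (x : X) (h : p x = 1) : conjExp (ofRealExp p) x = ⊤ := by
  simp [conjExp, ofRealExp, h]

lemma conj_gt (p : X → ℝ) (x : X) (h : 1 < p x) :
    conjExp (ofRealExp p) x = ENNReal.ofReal (p x / (p x - 1)) := by
  simp only [conjExp, ofRealExp, ENNReal.ofReal_ne_top, if_false]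
  rw [ENNReal.ofReal_div_of_pos (by linarith), ENNReal.ofReal_sub _ (by norm_num)]
  simp

lemma conj_top_iff (p : X → ℝ) (hp : ∀ x, 1 ≤ p x) (x : X) :
    conjExp (ofRealExp p) x = ⊤ ↔ p x = 1 := by
  rcases (hp x).lt_or_eq with h | h
  · rw [conj_gt p x h]; simp; linarith
  · simp [conj_one p x h.symm, h.symm]

lemma holder (μ : Measure X) (p : X → ℝ) (hpm : Measurable p) (hp : ∀ x, 1 ≤ p x)
    (w : X → ℝ≥0∞) (hwm : Measurable w) (hw : ∀ᵐ x ∂μ, 0 < w x ∧ w x < ⊤)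
    (B E : Set X) (hB : MeasurableSet B) (hE : MeasurableSet E) (hEB : E ⊆ B)
    (s ν : ℝ≥0∞) (hs0 : s ≠ 0) (hst : s ≠ ⊤) (hν0 : ν ≠ 0) (hνt : ν ≠ ⊤)
    (h1 : ∫⁻ x in E, (w x / s) ^ p x ∂μ ≤ 1)
    (h2 : modular μ (conjExp (ofRealExp p)) (fun x => B.indicator (fun y => (w y)⁻¹) x / ν) ≤ 1) :
    μ E ≤ 2 * (s * ν) := by
  set g : X → ℝ≥0∞ := fun x => B.indicator (fun y => (w y)⁻¹) x / ν with hg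
  have hm1 : MeasurableSet {x | p x = 1} := hpm (measurableSet_singleton 1)
  have hset : {x | conjExp (ofRealExp p) x = ⊤} = {x | p x = 1} := by
    ext x; exact conj_top_iff p hp x
  have hset' : {x | conjExp (ofRealExp p) x ≠ ⊤} = {x | p x = 1}ᶜ := by
    ext x; exact not_congr (conj_top_iff p hp x)
  unfold modular at h2
  rw [hset, hset'] at h2
  have h2a : ∫⁻ x in {x | p x = 1}ᶜ, g x ^ (conjExp (ofRealExp p) x).toReal ∂μ ≤ 1 :=
    le_trans le_self_add h2
  have h2b : essSup g (μ.restrict {x | p x = 1}) ≤ 1 := le_trans le_add_self h2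
  have h2c : ∀ᵐ x ∂μ, p x = 1 → g x ≤ 1 := by
    have := ENNReal.ae_le_essSup (μ := μ.restrict {x | p x = 1}) g
    rw [ae_restrict_iff' hm1] at this
    filter_upwards [this] with x hx h
    exact (hx h).trans h2b
  set G : X → ℝ≥0∞ := Set.indicator {x | p x = 1}ᶜ
    (fun x => g x ^ (conjExp (ofRealExp p) x).toReal) with hG
  have hGi : ∫⁻ x, G x ∂μ ≤ 1 := by
    rw [hG, lintegral_indicator hm1.compl]; exact h2a
  have hpt : ∀ᵐ x ∂μ, x ∈ E → (s * ν)⁻¹ ≤ (w x / s) ^ p x + G x := by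
    filter_upwards [hw, h2c] with x hx hx2 hxE
    have hgx : g x = (w x)⁻¹ / ν := by simp [hg, hEB hxE]
    have hprod : (s * ν)⁻¹ = (w x / s) * g x := by
      rw [hgx, ENNReal.mul_inv (Or.inl hs0) (Or.inl hst), div_eq_mul_inv, div_eq_mul_inv]
      calc s⁻¹ * ν⁻¹ = (w x * (w x)⁻¹) * (s⁻¹ * ν⁻¹) := by
            rw [ENNReal.mul_inv_cancel hx.1.ne' hx.2.ne, one_mul]
        _ = _ := by ring
    rw [hprod]
    rcases (hp x).lt_or_eq with h | h
    · have hGx : G x = g x ^ (p x / (p x - 1)) := by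
        have : x ∈ ({x | p x = 1}ᶜ : Set X) := by simp; linarith
        rw [hG, Set.indicator_of_mem this, conj_gt p x h, ENNReal.toReal_ofReal]
        exact div_nonneg (by linarith) (by linarith)
      rw [hGx]
      have hc : (p x).HolderConjugate (p x / (p x - 1)) := Real.HolderConjugate.conjExponent h
      refine (ENNReal.young_inequality _ _ hc).trans (add_le_add ?_ ?_)
      · exact ENNReal.div_le_of_le_mul (le_mul_of_one_le_right' (by
          rw [ENNReal.one_le_ofReal]; exact hc.lt.le))
      · exact ENNReal.div_le_of_le_mul (le_mul_of_one_le_right' (by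
          rw [ENNReal.one_le_ofReal]; exact hc.symm.lt.le))
    · rw [← h, ENNReal.rpow_one]
      refine le_trans ?_ le_self_add
      exact mul_le_of_le_one_right' (hx2 h.symm)
  have hint : (s * ν)⁻¹ * μ E ≤ 2 := by
    calc (s * ν)⁻¹ * μ E = ∫⁻ x in E, (s * ν)⁻¹ ∂μ := by simp
      _ ≤ ∫⁻ x in E, ((w x / s) ^ p x + G x) ∂μ := by
          apply lintegral_mono_ae
          rw [ae_restrict_iff' hE]; exact hpt
      _ = ∫⁻ x in E, (w x / s) ^ p x ∂μ + ∫⁻ x in E, G x ∂μ := by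
          apply lintegral_add_left
          exact (hwm.div_const s).pow hpm
      _ ≤ 1 + 1 := add_le_add h1 ((setLIntegral_le_lintegral _ _).trans hGi)
      _ = 2 := by norm_num
  have hsn0 : s * ν ≠ 0 := mul_ne_zero hs0 hν0
  have hsnt : s * ν ≠ ⊤ := ENNReal.mul_ne_top hst hνt
  calc μ E = (s * ν) * ((s * ν)⁻¹ * μ E) := by
        rw [← mul_assoc, ENNReal.mul_inv_cancel hsn0 hsnt, one_mul]
    _ ≤ (s * ν) * 2 := by gcongr
    _ = _ := by ring

lemma modular_ind (μ : Measure X) (p : X → ℝ) (hp : ∀ x, 1 ≤ p x)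
    (w : X → ℝ≥0∞) (B : Set X) (hB : MeasurableSet B) (s : ℝ≥0∞) :
    modular μ (ofRealExp p) (fun x => B.indicator w x / s) = ∫⁻ x in B, (w x / s) ^ p x ∂μ := by
  rw [modular_ofRealExp μ p hp, ← lintegral_indicator hB]
  refine lintegral_congr fun x => ?_
  by_cases h : x ∈ B
  · simp [h]
  · have : 0 < p x := by linarith [hp x]
    simp [h, this]

lemma key_H (d : X → X → ℝ) (μ : Measure X) (A₀ Cμ : ℝ)
    (hX : IsSHT d μ A₀ Cμ) (p : X → ℝ) (hpm : Measurable p) (hp : ∀ x, 1 ≤ p x)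
    (w : X → ℝ≥0∞) (hwm : Measurable w) (hw : ∀ᵐ x ∂μ, 0 < w x ∧ w x < ⊤)
    (hap : Apvar d μ (ofRealExp p) w) :
    ∃ C : ℝ, 0 < C ∧ ∀ z r, 0 < r → ∃ l : ℝ, 0 < l ∧
      ∫⁻ x in ball d z r, (w x / ENNReal.ofReal l) ^ p x ∂μ ≤ 1 ∧
      ∀ E ⊆ ball d z r, MeasurableSet E → ∀ s : ℝ, 0 < s →
        ∫⁻ x in E, (w x / ENNReal.ofReal s) ^ p x ∂μ ≤ 1 →
        (μ E).toReal * l ≤ C * (μ (ball d z r)).toReal * s := by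
  obtain ⟨K, hK⟩ := hap
  refine ⟨8 * K + 1, by positivity, fun z r hr => ?_⟩
  have hKB := hK z r hr
  have hB := hX.measurableSet_ball z r
  have hB0 := hX.ball_pos z r hr
  have hBt := hX.ball_ne_top z r hr
  set B := ball d z r with hBdef
  set L := luxNorm μ (ofRealExp p) (B.indicator w) with hL
  set N := luxNorm μ (conjExp (ofRealExp p)) (B.indicator fun y => (w y)⁻¹) with hN
  -- N > 0
  have hN0 : N ≠ 0 := by
    have hk : ∃ k : ℕ, μ (B ∩ {x | w x ≤ k}) ≠ 0 := by
      by_contra! hcon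
      have : μ (⋃ k : ℕ, B ∩ {x | w x ≤ k}) = 0 := measure_iUnion_null hcon
      have h2 : μ B = 0 := by
        rw [measure_eq_zero_iff_ae_notMem] at this ⊢
        filter_upwards [this, hw] with x hx hwx hxB
        apply hx
        obtain ⟨k, hk⟩ := ENNReal.exists_nat_gt hwx.2.ne
        exact Set.mem_iUnion.2 ⟨k, hxB, hk.le⟩
      exact hB0.ne' h2
    obtain ⟨k, hk⟩ := hk
    set E := B ∩ {x | w x ≤ k}
    have hE : MeasurableSet E := hB.inter (measurableSet_le hwm measurable_const)
    set M : ℝ≥0∞ := max 1 (μ B) with hM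
    have hMt : M ≠ ⊤ := by simp [hM, hBt]
    have hM1 : 1 ≤ M := le_max_left _ _
    set s : ℝ≥0∞ := (k + 1) * M with hs
    have hs0 : s ≠ 0 := mul_ne_zero (by simp) (by positivity)
    have hst : s ≠ ⊤ := ENNReal.mul_ne_top (by simp) hMt
    have h1 : ∫⁻ x in E, (w x / s) ^ p x ∂μ ≤ 1 := by
      calc ∫⁻ x in E, (w x / s) ^ p x ∂μ ≤ ∫⁻ x in E, M⁻¹ ∂μ := by
            apply setLIntegral_mono' hE
            intro x hx
            have hws : w x / s ≤ M⁻¹ := by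
              apply ENNReal.div_le_of_le_mul
              rw [hs, mul_comm, mul_assoc, ENNReal.mul_inv_cancel (by positivity) hMt, mul_one]
              exact hx.2.trans le_self_add
            calc (w x / s) ^ p x ≤ (w x / s) ^ (1 : ℝ) := by
                  apply ENNReal.rpow_le_rpow_of_exponent_ge _ (hp x)
                  exact hws.trans (ENNReal.inv_le_one.2 hM1)
              _ ≤ M⁻¹ := by rwa [ENNReal.rpow_one]
        _ = M⁻¹ * μ E := by simp
        _ ≤ M⁻¹ * M := by
            gcongr; exact (measure_mono Set.inter_subset_left).trans (le_max_right _ _)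
        _ = 1 := ENNReal.inv_mul_cancel (by positivity) hMt
    have hlow : μ E / (2 * s) ≤ N := by
      apply le_sInf
      rintro ν ⟨hν0, hν⟩
      by_cases hνt : ν = ⊤
      · rw [hνt]; exact le_top
      apply ENNReal.div_le_of_le_mul
      have := holder μ p hpm hp w hwm hw B E hB hE Set.inter_subset_left s ν hs0 hst hν0.ne' hνt h1 hν
      calc _ ≤ _ := this
        _ = _ := by ring
    intro h0
    rw [h0] at hlow
    have : μ E / (2 * s) ≠ 0 := ENNReal.div_ne_zero.2 ⟨hk, ENNReal.mul_ne_top (by simp) hst⟩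
    exact this (le_zero_iff.1 hlow)
  have hWpos : ∫⁻ x in B, w x ^ p x ∂μ ≠ 0 := by
    intro h0
    rw [lintegral_eq_zero_iff (hwm.pow hpm), EventuallyEq, ae_restrict_iff' hB] at h0
    apply hB0.ne'
    rw [measure_eq_zero_iff_ae_notMem]
    filter_upwards [h0, hw] with x hx hwx hxB
    have := hx hxB
    simp only [Pi.zero_apply] at this
    rw [ENNReal.rpow_eq_zero_iff] at this
    rcases this with h | h
    · exact hwx.1.ne' h.1
    · exact hwx.2.ne h.1
  have hL0 : L ≠ 0 := by
    have hlow : min 1 (∫⁻ x in B, w x ^ p x ∂μ) ≤ L := by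
      apply le_sInf
      rintro l ⟨hl0, hl⟩
      rw [modular_ind μ p hp w B hB] at hl
      rcases le_total 1 l with h | h
      · exact (min_le_left _ _).trans h
      refine (min_le_right _ _).trans ?_
      have hlt : l ≠ ⊤ := ne_top_of_le_ne_top (by simp) h
      calc ∫⁻ x in B, w x ^ p x ∂μ ≤ ∫⁻ x in B, l * (w x / l) ^ p x ∂μ := by
            apply setLIntegral_mono' hB
            intro x hx
            have : w x ^ p x = l ^ p x * (w x / l) ^ p x := by
              rw [← ENNReal.mul_rpow_of_nonneg _ _ (by linarith [hp x]),
                ENNReal.mul_div_cancel hl0.ne' hlt]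
            rw [this]
            gcongr
            calc l ^ p x ≤ l ^ (1 : ℝ) := ENNReal.rpow_le_rpow_of_exponent_ge h (hp x)
              _ = l := ENNReal.rpow_one l
        _ = l * ∫⁻ x in B, (w x / l) ^ p x ∂μ := lintegral_const_mul' _ _ hlt
        _ ≤ l * 1 := by gcongr
        _ = l := mul_one l
    intro h0
    rw [h0] at hlow
    have : min 1 (∫⁻ x in B, w x ^ p x ∂μ) ≠ 0 := by
      rcases min_choice 1 (∫⁻ x in B, w x ^ p x ∂μ) with h | h <;> rw [h]
      · simp
      · exact hWpos
    exact this (le_zero_iff.1 hlow)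
  have hLNt : L * N ≠ ⊤ := ne_top_of_le_ne_top (ENNReal.mul_ne_top (by simp) hBt) hKB
  have hLt : L ≠ ⊤ := fun h => hLNt (by rw [h, ENNReal.top_mul hN0])
  have hNt : N ≠ ⊤ := fun h => hLNt (by rw [h, ENNReal.mul_top hL0])
  have two_lt : ∀ a : ℝ≥0∞, a ≠ 0 → a ≠ ⊤ → a < 2 * a := fun a h0 ht => by
    rw [two_mul]; exact ENNReal.lt_add_right ht h0
  obtain ⟨l, ⟨hl0, hl⟩, hlL⟩ := sInf_lt_iff.1 (two_lt L hL0 hLt)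
  obtain ⟨ν, ⟨hν0, hν⟩, hνN⟩ := sInf_lt_iff.1 (two_lt N hN0 hNt)
  have hlt : l ≠ ⊤ := hlL.ne_top
  have hνt : ν ≠ ⊤ := hνN.ne_top
  rw [modular_ind μ p hp w B hB] at hl
  refine ⟨l.toReal, ENNReal.toReal_pos hl0.ne' hlt, by rwa [ENNReal.ofReal_toReal hlt], ?_⟩
  intro E hEB hE s hs hsE
  have hh := holder μ p hpm hp w hwm hw B E hB hE hEB (ENNReal.ofReal s) ν (by simpa using hs)
    (by simp) hν0.ne' hνt hsE hν
  have h3 : μ E * l ≤ 8 * K * μ B * ENNReal.ofReal s := by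
    calc μ E * l ≤ (2 * (ENNReal.ofReal s * ν)) * l := by gcongr
      _ ≤ (2 * (ENNReal.ofReal s * (2 * N))) * (2 * L) := by gcongr
      _ = 8 * ENNReal.ofReal s * (L * N) := by ring
      _ ≤ 8 * ENNReal.ofReal s * (K * μ B) := by gcongr
      _ = _ := by ring
  have h4 := ENNReal.toReal_mono (ENNReal.mul_ne_top (ENNReal.mul_ne_top (by
    exact ENNReal.mul_ne_top (by simp) (by simp)) hBt) (by simp)) h3
  simp only [ENNReal.toReal_mul, ENNReal.toReal_ofReal hs.le] at h4
  refine h4.trans ?_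
  have : (0 : ℝ) ≤ (μ B).toReal * s := by positivity
  simp only [ENNReal.toReal_ofNat, ENNReal.coe_toReal]
  nlinarith

lemma doubling_pow (d : X → X → ℝ) (μ : Measure X) (A₀ Cμ : ℝ) (hX : IsSHT d μ A₀ Cμ) :
    ∃ n : ℕ, ∀ z r R, 0 < r → r ≤ R →
      (μ (ball d z R)).toReal ≤ (2 * (R / r)) ^ n * (μ (ball d z r)).toReal := by
  obtain ⟨n, hn⟩ := pow_unbounded_of_one_lt Cμ (one_lt_two : (1 : ℝ) < 2)
  refine ⟨n, fun z r R hr hR => ?_⟩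
  have hdb : ∀ r, 0 < r → (μ (ball d z (2 * r))).toReal ≤ Cμ * (μ (ball d z r)).toReal := by
    intro r hr
    have := ENNReal.toReal_mono (ENNReal.mul_ne_top (by simp) (hX.ball_ne_top z r hr))
      (hX.doubling z r hr)
    rwa [ENNReal.toReal_mul, ENNReal.toReal_ofReal (by linarith [hX.one_le_Cμ])] at this
  have hit : ∀ k : ℕ, (μ (ball d z (2 ^ k * r))).toReal ≤ Cμ ^ k * (μ (ball d z r)).toReal := by
    intro k
    induction k with
    | zero => simp
    | succ k ih =>
      calc (μ (ball d z (2 ^ (k + 1) * r))).toReal = (μ (ball d z (2 * (2 ^ k * r)))).toReal := by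
            congr 3; ring
        _ ≤ Cμ * (μ (ball d z (2 ^ k * r))).toReal := hdb _ (by positivity)
        _ ≤ Cμ * (Cμ ^ k * (μ (ball d z r)).toReal) := by
            gcongr; linarith [hX.one_le_Cμ]
        _ = _ := by ring
  have h1 : 1 ≤ R / r := by rwa [le_div_iff₀ hr, one_mul]
  obtain ⟨k, hk1, hk2⟩ := exists_nat_pow_near h1 (one_lt_two : (1 : ℝ) < 2)
  have hsub : ball d z R ⊆ ball d z (2 ^ (k + 1) * r) := by
    intro y hy
    have : R < 2 ^ (k + 1) * r := by rwa [div_lt_iff₀ hr] at hk2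
    exact lt_of_lt_of_le (show d z y < R from hy) this.le
  have h0 := hX.one_le_Cμ
  calc (μ (ball d z R)).toReal ≤ (μ (ball d z (2 ^ (k + 1) * r))).toReal :=
        ENNReal.toReal_mono (hX.ball_ne_top _ _ (by positivity)) (measure_mono hsub)
    _ ≤ Cμ ^ (k + 1) * (μ (ball d z r)).toReal := hit _
    _ ≤ ((2 : ℝ) ^ n) ^ (k + 1) * (μ (ball d z r)).toReal := by gcongr
    _ = (2 * 2 ^ k) ^ n * (μ (ball d z r)).toReal := by
        rw [← pow_succ', ← pow_mul, ← pow_mul, mul_comm n]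
    _ ≤ _ := by gcongr

lemma log_e_ge (t : ℝ) (ht : 0 ≤ t) : 1 ≤ Real.log (Real.exp 1 + t) := by
  rw [Real.le_log_iff_exp_le (by positivity)]; linarith

lemma osc_log (d : X → X → ℝ) (μ : Measure X) (A₀ Cμ : ℝ) (hX : IsSHT d μ A₀ Cμ) (x₀ : X)
    (p : X → ℝ) (q : ℝ) (h0 : LH0 d p) (hi : LHinf d x₀ p q) :
    ∃ K : ℝ, 0 ≤ K ∧ ∀ z r, 0 < r → ∀ x ∈ ball d z r,
      |p x - p z| * Real.log (A₀ * (1 + r + d z x₀) / r) ≤ K ∧ |p x - p z| ≤ K := by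
  obtain ⟨C0, hC0, h0⟩ := h0
  obtain ⟨Ci, hCi, hi⟩ := hi
  have hA := hX.one_le_A₀
  have hosc : ∀ x z, |p x - p z| ≤ |p x - q| + |p z - q| := fun x z => by
    rw [abs_sub_comm (p z) q]; exact abs_sub_le _ _ _
  have hq : ∀ x, |p x - q| ≤ Ci := fun x =>
    (hi x).trans (div_le_self hCi.le (log_e_ge _ (hX.d_nonneg _ _)))
  have hosc2 : ∀ x z, |p x - p z| ≤ 2 * Ci := fun x z => by
    linarith [hosc x z, hq x, hq z]
  -- far points
  have hfar : ∀ z r x, 0 < r → x ∈ ball d z r → 2 * A₀ * r < d z x₀ →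
      |p x - p z| * Real.log (A₀ * (5 + 4 * d z x₀)) ≤ 2 * Ci * (Real.log (8 * A₀ ^ 2) + 1) := by
    intro z r x hr hx hfar
    set h := d z x₀ with hh
    have hh0 : 0 ≤ h := hX.d_nonneg _ _
    have hxr : d z x < r := hx
    have htri : h ≤ A₀ * (d z x + d x x₀) := hX.d_triangle z x₀ x
    have hdx : h / (2 * A₀) ≤ d x x₀ := by
      rw [div_le_iff₀ (by positivity)]
      nlinarith
    set T := Real.log (Real.exp 1 + h / (2 * A₀)) with hT
    have hhA : 0 ≤ h / (2 * A₀) := by positivity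
    have hT1 : 1 ≤ T := log_e_ge _ hhA
    have b1 : |p x - q| ≤ Ci / T := by
      refine (hi x).trans ?_
      have : T ≤ Real.log (Real.exp 1 + d x x₀) :=
        Real.log_le_log (by positivity) (by linarith)
      gcongr
    have b2 : |p z - q| ≤ Ci / T := by
      refine (hi z).trans ?_
      have hle : h / (2 * A₀) ≤ h := div_le_self hh0 (by linarith)
      have : T ≤ Real.log (Real.exp 1 + d z x₀) :=
        Real.log_le_log (by positivity) (by linarith)
      gcongr
    have b3 : |p x - p z| ≤ 2 * Ci / T := by
      have := hosc x z
      calc _ ≤ Ci / T + Ci / T := by linarith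
        _ = _ := by ring
    have he : 1 ≤ Real.exp 1 := Real.one_le_exp (by norm_num)
    have hl : Real.log (A₀ * (5 + 4 * h)) ≤ (Real.log (8 * A₀ ^ 2) + 1) * T := by
      have hmono : A₀ * (5 + 4 * h) ≤ 8 * A₀ ^ 2 * (Real.exp 1 + h / (2 * A₀)) := by
        have e1 : 8 * A₀ ^ 2 * (h / (2 * A₀)) = 4 * A₀ * h := by field_simp; ring
        rw [mul_add (8 * A₀ ^ 2), e1]
        nlinarith
      have hl1 : 0 ≤ Real.log (8 * A₀ ^ 2) := Real.log_nonneg (by nlinarith)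
      calc _ ≤ Real.log (8 * A₀ ^ 2 * (Real.exp 1 + h / (2 * A₀))) :=
            Real.log_le_log (by positivity) hmono
        _ = Real.log (8 * A₀ ^ 2) + T := Real.log_mul (by positivity) (by positivity)
        _ ≤ _ := by nlinarith
    have hl0 : 0 ≤ Real.log (A₀ * (5 + 4 * h)) := Real.log_nonneg (by nlinarith)
    calc _ ≤ 2 * Ci / T * ((Real.log (8 * A₀ ^ 2) + 1) * T) := by gcongr
      _ = _ := by field_simp
  set K1 := 2 * Ci * (Real.log (8 * A₀ ^ 2) + 1) with hK1
  set K2 := 2 * Ci * Real.log (A₀ * (5 + 8 * A₀)) with hK2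
  have hl1 : 0 ≤ Real.log (8 * A₀ ^ 2) := Real.log_nonneg (by nlinarith)
  have hl2 : 0 ≤ Real.log (A₀ * (5 + 8 * A₀)) := Real.log_nonneg (by nlinarith)
  have hK1' : 0 ≤ K1 := by positivity
  have hK2' : 0 ≤ K2 := by positivity
  refine ⟨K1 + K2 + C0 + 2 * Ci, by positivity, fun z r hr x hx => ⟨?_, by
    linarith [hosc2 x z]⟩⟩
  have hh0 : 0 ≤ d z x₀ := hX.d_nonneg _ _
  have ho0 : 0 ≤ |p x - p z| := abs_nonneg _
  -- near bound
  have hnear : ∀ t, 0 < t → t ≤ A₀ * (5 + 8 * A₀) → |p x - p z| * Real.log t ≤ K2 := by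
    intro t ht htA
    calc |p x - p z| * Real.log t ≤ |p x - p z| * Real.log (A₀ * (5 + 8 * A₀)) := by
          gcongr
      _ ≤ K2 := by
          rw [hK2]; gcongr; exact hosc2 x z
  rcases le_or_gt (1 / 4) r with hr4 | hr4
  · rcases le_or_gt (d z x₀) (2 * A₀ * r) with hc | hc
    · have : |p x - p z| * Real.log (A₀ * (1 + r + d z x₀) / r) ≤ K2 := by
        apply hnear _ (by positivity)
        rw [div_le_iff₀ hr]
        have : 1 + r + d z x₀ ≤ (5 + 8 * A₀) * r := by nlinarith
        calc _ ≤ A₀ * ((5 + 8 * A₀) * r) := by gcongr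
          _ = _ := by ring
      linarith
    · have h1 := hfar z r x hr hx hc
      have h2 : Real.log (A₀ * (1 + r + d z x₀) / r) ≤ Real.log (A₀ * (5 + 4 * d z x₀)) := by
        apply Real.log_le_log (by positivity)
        rw [div_le_iff₀ hr]
        have : 1 + r + d z x₀ ≤ (5 + 4 * d z x₀) * r := by nlinarith
        calc _ ≤ A₀ * ((5 + 4 * d z x₀) * r) := by gcongr
          _ = _ := by ring
      have := mul_le_mul_of_nonneg_left h2 ho0
      linarith
  · have hlogr : Real.log r < 0 := Real.log_neg hr (by linarith)
    have hsplit : Real.log (A₀ * (1 + r + d z x₀) / r) =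
        Real.log (A₀ * (1 + r + d z x₀)) + (- Real.log r) := by
      rw [Real.log_div (by positivity) hr.ne']; ring
    have hloc : |p x - p z| * (- Real.log r) ≤ C0 := by
      rcases (hX.d_nonneg x z).lt_or_eq with hd | hd
      · have hxr : d x z < r := by rw [hX.d_symm]; exact hx
        have hb := h0 x z hd (by linarith)
        have hlog : Real.log (d x z) ≤ Real.log r := Real.log_le_log hd hxr.le
        have : |p x - p z| ≤ C0 / (- Real.log r) := by
          refine hb.trans ?_
          gcongr
          linarith
        rwa [le_div_iff₀ (by linarith)] at this
      · have : x = z := (hX.d_eq_zero_iff x z).1 hd.symm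
        rw [this]; simp; exact hC0.le
    have hfirst : |p x - p z| * Real.log (A₀ * (1 + r + d z x₀)) ≤ K1 + K2 := by
      rcases le_or_gt (d z x₀) (2 * A₀) with hc | hc
      · have : |p x - p z| * Real.log (A₀ * (1 + r + d z x₀)) ≤ K2 := by
          apply hnear _ (by positivity)
          gcongr
          · linarith
          · linarith
        linarith
      · have h1 := hfar z r x hr hx (by nlinarith)
        have h2 : Real.log (A₀ * (1 + r + d z x₀)) ≤ Real.log (A₀ * (5 + 4 * d z x₀)) := by
          apply Real.log_le_log (by positivity)
          gcongr
          · linarith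
          · linarith
        have := mul_le_mul_of_nonneg_left h2 ho0
        linarith
    rw [hsplit, mul_add]
    linarith

/-- The scaled modular of the weight over a set. -/
noncomputable def II (μ : Measure X) (W : X → ℝ≥0∞) (p : X → ℝ) (E : Set X) (s : ℝ) : ℝ≥0∞ :=
  ∫⁻ x in E, W x * ENNReal.ofReal (s ^ (-p x)) ∂μ

lemma II_le (μ : Measure X) (W : X → ℝ≥0∞) (p : X → ℝ) (E : Set X) (hE : MeasurableSet E)
    (s k : ℝ) (h : ∀ x ∈ E, s ^ (-p x) ≤ k) :
    II μ W p E s ≤ (∫⁻ x in E, W x ∂μ) * ENNReal.ofReal k := by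
  unfold II
  rw [← lintegral_mul_const' _ _ (by simp)]
  apply setLIntegral_mono' hE
  intro x hx
  gcongr
  exact h x hx

lemma le_II (μ : Measure X) (W : X → ℝ≥0∞) (p : X → ℝ) (E : Set X) (hE : MeasurableSet E)
    (s k : ℝ) (h : ∀ x ∈ E, k ≤ s ^ (-p x)) :
    (∫⁻ x in E, W x ∂μ) * ENNReal.ofReal k ≤ II μ W p E s := by
  unfold II
  rw [← lintegral_mul_const' _ _ (by simp)]
  apply setLIntegral_mono' hE
  intro x hx
  gcongr
  exact h x hx

lemma II_mono_set (μ : Measure X) (W : X → ℝ≥0∞) (p : X → ℝ) (E F : Set X) (h : E ⊆ F)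
    (s : ℝ) : II μ W p E s ≤ II μ W p F s := lintegral_mono_set h

lemma le_of_II (μ : Measure X) (W : X → ℝ≥0∞) (p : X → ℝ) (E : Set X) (hE : MeasurableSet E)
    (s k : ℝ) (hk : 0 < k) (h : ∀ x ∈ E, k⁻¹ ≤ s ^ (-p x)) (hI : II μ W p E s ≤ 1) :
    (∫⁻ x in E, W x ∂μ) ≤ ENNReal.ofReal k := by
  have h1 := (le_II μ W p E hE s k⁻¹ h).trans hI
  calc (∫⁻ x in E, W x ∂μ) = (∫⁻ x in E, W x ∂μ) * ENNReal.ofReal k⁻¹ * ENNReal.ofReal k := by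
        rw [mul_assoc, ← ENNReal.ofReal_mul (by positivity), inv_mul_cancel₀ hk.ne']; simp
    _ ≤ 1 * ENNReal.ofReal k := by gcongr
    _ = _ := one_mul _

/-- The standing hypotheses of the core argument. -/
structure Core (d : X → X → ℝ) (μ : Measure X) (x₀ : X) (p : X → ℝ) (q P : ℝ)
    (W : X → ℝ≥0∞) (C : ℝ) (l : X → ℝ → ℝ) : Prop where
  hp1 : ∀ x, 1 ≤ p x
  hpP : ∀ x, p x ≤ P
  hq1 : 1 ≤ q
  hqP : q ≤ P
  h0 : LH0 d p
  hi : LHinf d x₀ p q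
  hC : 0 < C
  lpos : ∀ z r, 0 < r → 0 < l z r
  hl : ∀ z r, 0 < r → II μ W p (ball d z r) (l z r) ≤ 1
  hH : ∀ z r, 0 < r → ∀ E ⊆ ball d z r, MeasurableSet E → ∀ s : ℝ, 0 < s →
        II μ W p E s ≤ 1 → (μ E).toReal * l z r ≤ C * (μ (ball d z r)).toReal * s

lemma ball_toReal_pos (d : X → X → ℝ) (μ : Measure X) (A₀ Cμ : ℝ) (hX : IsSHT d μ A₀ Cμ)
    (z : X) (r : ℝ) (hr : 0 < r) : 0 < (μ (ball d z r)).toReal :=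
  ENNReal.toReal_pos (hX.ball_pos z r hr).ne' (hX.ball_ne_top z r hr)

lemma Core.l_mono {d : X → X → ℝ} {μ : Measure X} {A₀ Cμ : ℝ} (hX : IsSHT d μ A₀ Cμ) {x₀ : X}
    {p : X → ℝ} {q P : ℝ} {W : X → ℝ≥0∞} {C : ℝ} {l : X → ℝ → ℝ}
    (hc : Core d μ x₀ p q P W C l) (z z' : X) (r r' : ℝ) (hr : 0 < r) (hr' : 0 < r')
    (hsub : ball d z r ⊆ ball d z' r') : l z r ≤ C * l z' r' := by
  have h := hc.hH z r hr (ball d z r) le_rfl (hX.measurableSet_ball z r) (l z' r')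
    (hc.lpos z' r' hr') ((II_mono_set μ W p _ _ hsub _).trans (hc.hl z' r' hr'))
  have hpos := ball_toReal_pos d μ A₀ Cμ hX z r hr
  have : (μ (ball d z r)).toReal * l z r ≤ (μ (ball d z r)).toReal * (C * l z' r') := by
    linarith
  exact le_of_mul_le_mul_left this hpos

lemma Core.l_back {d : X → X → ℝ} {μ : Measure X} {A₀ Cμ : ℝ} (hX : IsSHT d μ A₀ Cμ) {x₀ : X}
    {p : X → ℝ} {q P : ℝ} {W : X → ℝ≥0∞} {C : ℝ} {l : X → ℝ → ℝ}
    (hc : Core d μ x₀ p q P W C l) (n : ℕ)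
    (hn : ∀ z r R, 0 < r → r ≤ R →
      (μ (ball d z R)).toReal ≤ (2 * (R / r)) ^ n * (μ (ball d z r)).toReal)
    (z : X) (r R : ℝ) (hr : 0 < r) (hR : r ≤ R) :
    l z R ≤ C * (2 * (R / r)) ^ n * l z r := by
  have hsub : ball d z r ⊆ ball d z R := fun y hy => lt_of_lt_of_le (show d z y < r from hy) hR
  have h := hc.hH z R (by linarith) (ball d z r) hsub (hX.measurableSet_ball z r) (l z r)
    (hc.lpos z r hr) (hc.hl z r hr)
  have hpos := ball_toReal_pos d μ A₀ Cμ hX z r hr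
  have h2 := hn z r R hr hR
  have hlp := hc.lpos z r hr
  have hC := hc.hC
  have : (μ (ball d z r)).toReal * l z R ≤
      (μ (ball d z r)).toReal * (C * (2 * (R / r)) ^ n * l z r) := by
    calc _ ≤ _ := h
      _ ≤ C * ((2 * (R / r)) ^ n * (μ (ball d z r)).toReal) * l z r := by gcongr
      _ = _ := by ring
  exact le_of_mul_le_mul_left this hpos

/-- Weight of a set through an upper bound `a ≥ 1` on the norm. -/
lemma Core.W_le {d : X → X → ℝ} {μ : Measure X} {A₀ Cμ : ℝ} (hX : IsSHT d μ A₀ Cμ) {x₀ : X}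
    {p : X → ℝ} {q P : ℝ} {W : X → ℝ≥0∞} {C : ℝ} {l : X → ℝ → ℝ}
    (hc : Core d μ x₀ p q P W C l) (z : X) (r : ℝ) (hr : 0 < r) (a : ℝ) (ha : 1 ≤ a)
    (hla : l z r ≤ a) : ∫⁻ x in ball d z r, W x ∂μ ≤ ENNReal.ofReal (a ^ P) := by
  have hlp := hc.lpos z r hr
  refine le_of_II μ W p _ (hX.measurableSet_ball z r) (l z r) (a ^ P) (by positivity) ?_
    (hc.hl z r hr)
  intro x _
  rw [Real.rpow_neg hlp.le]
  apply inv_anti₀ (by positivity)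
  calc l z r ^ p x ≤ a ^ p x := Real.rpow_le_rpow hlp.le hla (by linarith [hc.hp1 x])
    _ ≤ a ^ P := Real.rpow_le_rpow_of_exponent_le ha (hc.hpP x)

lemma Core.small {d : X → X → ℝ} {μ : Measure X} {A₀ Cμ : ℝ} (hX : IsSHT d μ A₀ Cμ) {x₀ : X}
    {p : X → ℝ} {q P : ℝ} {W : X → ℝ≥0∞} {C : ℝ} {l : X → ℝ → ℝ}
    (hc : Core d μ x₀ p q P W C l) :
    ∃ D m : ℝ, 0 ≤ D ∧ 0 < m ∧ ∀ a : ℝ, 1 ≤ a →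
      ∫⁻ x in ball d x₀ (a ^ (1 / m)), W x ∂μ ≤ ENNReal.ofReal (D * a) := by
  obtain ⟨n, hn⟩ := doubling_pow d μ A₀ Cμ hX
  have hP : 1 ≤ P := hc.hq1.trans hc.hqP
  set C2 := max 1 (C * 2 ^ n * l x₀ 1) with hC2
  have hC21 : 1 ≤ C2 := le_max_left _ _
  have hm : 0 < (n : ℝ) * P + 1 := by positivity
  refine ⟨C2 ^ P, n * P + 1, by positivity, hm, fun a ha => ?_⟩
  set ρ := a ^ (1 / ((n : ℝ) * P + 1)) with hρ
  have hρ1 : 1 ≤ ρ := Real.one_le_rpow ha (by positivity)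
  have hb := hc.l_back hX n hn x₀ 1 ρ one_pos hρ1
  have hle : l x₀ ρ ≤ C2 * ρ ^ n := by
    calc _ ≤ _ := hb
      _ = (C * 2 ^ n * l x₀ 1) * ρ ^ n := by rw [div_one, mul_pow]; ring
      _ ≤ _ := by gcongr; exact le_max_right _ _
  have h1 := hc.W_le hX x₀ ρ (by positivity) (C2 * ρ ^ n)
    (one_le_mul_of_one_le_of_one_le hC21 (one_le_pow₀ hρ1)) hle
  refine h1.trans (ENNReal.ofReal_le_ofReal ?_)
  rw [Real.mul_rpow (by positivity) (by positivity)]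
  gcongr
  rw [← Real.rpow_natCast, ← Real.rpow_mul (by positivity), hρ, ← Real.rpow_mul (by positivity)]
  calc a ^ (1 / ((n : ℝ) * P + 1) * (n * P)) ≤ a ^ (1 : ℝ) := by
        apply Real.rpow_le_rpow_of_exponent_le ha
        rw [one_div, inv_mul_le_iff₀ hm]; linarith
    _ = a := Real.rpow_one a

lemma Core.far {d : X → X → ℝ} {μ : Measure X} {A₀ Cμ : ℝ} (hX : IsSHT d μ A₀ Cμ) {x₀ : X}
    {p : X → ℝ} {q P : ℝ} {W : X → ℝ≥0∞} {C : ℝ} {l : X → ℝ → ℝ}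
    (hc : Core d μ x₀ p q P W C l) (m : ℝ) (hm : 0 < m) :
    ∃ F : ℝ, 1 ≤ F ∧ ∀ a : ℝ, 1 ≤ a → ∀ x, x ∉ ball d x₀ (a ^ (1 / m)) →
      a ^ p x ≤ F * a ^ q ∧ a ^ q ≤ F * a ^ p x := by
  obtain ⟨Ci, hCi, hi⟩ := hc.hi
  refine ⟨Real.exp (m * Ci), Real.one_le_exp (by positivity), fun a ha x hx => ?_⟩
  have ha0 : 0 < a := by linarith
  have hx' : a ^ (1 / m) ≤ d x₀ x := not_lt.1 hx
  have hd := hX.d_nonneg x x₀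
  rw [hX.d_symm] at hx'
  set T := Real.log (Real.exp 1 + d x x₀) with hT
  have hT1 : 1 ≤ T := log_e_ge _ hd
  have hlog : Real.log a ≤ m * T := by
    have h1 : Real.log (a ^ (1 / m)) ≤ T :=
      Real.log_le_log (by positivity) (by linarith [Real.exp_pos 1])
    rw [Real.log_rpow ha0, one_div, inv_mul_le_iff₀ hm] at h1
    exact h1
  have hla : 0 ≤ Real.log a := Real.log_nonneg ha
  have hb : |p x - q| * Real.log a ≤ m * Ci := by
    calc _ ≤ Ci / T * (m * T) := by
          gcongr
          exact hi x
      _ = _ := by field_simp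
  have key : ∀ u v : ℝ, u - v ≤ |p x - q| → a ^ u ≤ Real.exp (m * Ci) * a ^ v := by
    intro u v huv
    rw [Real.rpow_def_of_pos ha0, Real.rpow_def_of_pos ha0, ← Real.exp_add]
    apply Real.exp_le_exp.2
    nlinarith [mul_le_mul_of_nonneg_right huv hla]
  exact ⟨key _ _ (le_abs_self _), key _ _ (by rw [abs_sub_comm]; exact le_abs_self _)⟩

lemma split_lintegral (μ : Measure X) (f : X → ℝ≥0∞) (S T : Set X) (hT : MeasurableSet T) :
    ∫⁻ x in S, f x ∂μ ≤ ∫⁻ x in S \ T, f x ∂μ + ∫⁻ x in S ∩ T, f x ∂μ := by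
  rw [add_comm, lintegral_inter_add_sdiff f S hT]

lemma Core.infty {d : X → X → ℝ} {μ : Measure X} {A₀ Cμ : ℝ} (hX : IsSHT d μ A₀ Cμ) {x₀ : X}
    {p : X → ℝ} {q P : ℝ} {W : X → ℝ≥0∞} {C : ℝ} {l : X → ℝ → ℝ}
    (hc : Core d μ x₀ p q P W C l) :
    ∃ F : ℝ, 1 ≤ F ∧ ∀ a : ℝ, 1 ≤ a → ∀ S : Set X, MeasurableSet S →
      (II μ W p S a ≤ 1 → ∫⁻ x in S, W x ∂μ ≤ ENNReal.ofReal (F * a ^ q)) ∧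
      (∫⁻ x in S, W x ∂μ ≤ ENNReal.ofReal (a ^ q) → II μ W p S (F * a) ≤ 1) := by
  obtain ⟨D, m, hD, hm, hsm⟩ := hc.small hX
  obtain ⟨F, hF, hfar⟩ := hc.far hX m hm
  refine ⟨F + D, by linarith, fun a ha S hS => ?_⟩
  have ha0 : 0 < a := by linarith
  set T := ball d x₀ (a ^ (1 / m)) with hT
  have hTm : MeasurableSet T := hX.measurableSet_ball _ _
  have hST : ∫⁻ x in S ∩ T, W x ∂μ ≤ ENNReal.ofReal (D * a) :=
    (lintegral_mono_set Set.inter_subset_right).trans (hsm a ha)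
  constructor
  · intro hI
    have h1 : ∫⁻ x in S \ T, W x ∂μ ≤ ENNReal.ofReal (F * a ^ q) := by
      refine le_of_II μ W p _ (hS.diff hTm) a _ (by positivity) ?_
        ((II_mono_set μ W p _ _ Set.sdiff_subset _).trans hI)
      intro x hx
      rw [Real.rpow_neg ha0.le]
      exact inv_anti₀ (by positivity) (hfar a ha x hx.2).1
    refine (split_lintegral μ W S T hTm).trans ((add_le_add h1 hST).trans ?_)
    rw [← ENNReal.ofReal_add (by positivity) (by positivity)]
    apply ENNReal.ofReal_le_ofReal
    have : a ≤ a ^ q := Real.self_le_rpow_of_one_le ha hc.hq1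
    nlinarith
  · intro hW
    have hFD : 1 ≤ F + D := by linarith
    have hFD0 : 0 < F + D := by linarith
    have hsc : ∀ x, ((F + D) * a) ^ (-p x) ≤ (F + D)⁻¹ * a ^ (-p x) := by
      intro x
      rw [Real.mul_rpow (by positivity) (by positivity)]
      gcongr
      rw [Real.rpow_neg hFD0.le]
      apply inv_anti₀ hFD0
      exact Real.self_le_rpow_of_one_le hFD (hc.hp1 x)
    have h1 : II μ W p (S \ T) ((F + D) * a) ≤ ENNReal.ofReal (F / (F + D)) := by
      refine (II_le μ W p _ (hS.diff hTm) _ ((F + D)⁻¹ * (F * (a ^ q)⁻¹)) ?_).trans ?_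
      · intro x hx
        refine (hsc x).trans ?_
        gcongr
        rw [Real.rpow_neg ha0.le, ← div_eq_mul_inv, le_div_iff₀ (by positivity),
          inv_mul_le_iff₀ (by positivity), mul_comm]
        exact (hfar a ha x hx.2).2
      · calc _ ≤ ENNReal.ofReal (a ^ q) * ENNReal.ofReal ((F + D)⁻¹ * (F * (a ^ q)⁻¹)) := by
              gcongr
              exact (lintegral_mono_set Set.sdiff_subset).trans hW
          _ = _ := by
              rw [← ENNReal.ofReal_mul (by positivity)]
              congr 1
              field_simp
    have h2 : II μ W p (S ∩ T) ((F + D) * a) ≤ ENNReal.ofReal (D / (F + D)) := by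
      refine (II_le μ W p _ (hS.inter hTm) _ ((F + D)⁻¹ * a⁻¹) ?_).trans ?_
      · intro x hx
        refine (hsc x).trans ?_
        gcongr
        rw [Real.rpow_neg ha0.le]
        exact inv_anti₀ ha0 (Real.self_le_rpow_of_one_le ha (hc.hp1 x))
      · calc _ ≤ ENNReal.ofReal (D * a) * ENNReal.ofReal ((F + D)⁻¹ * a⁻¹) := by
              gcongr
          _ = _ := by
              rw [← ENNReal.ofReal_mul (by positivity)]
              congr 1
              field_simp
    refine (split_lintegral μ _ S T hTm).trans ((add_le_add h1 h2).trans ?_)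
    rw [← ENNReal.ofReal_add (by positivity) (by positivity), ← add_div, div_self hFD0.ne']
    simp

lemma Core.osc {d : X → X → ℝ} {μ : Measure X} {A₀ Cμ : ℝ} (hX : IsSHT d μ A₀ Cμ) {x₀ : X}
    {p : X → ℝ} {q P : ℝ} {W : X → ℝ≥0∞} {C : ℝ} {l : X → ℝ → ℝ}
    (hc : Core d μ x₀ p q P W C l) :
    ∃ F : ℝ, 1 ≤ F ∧ ∀ z r, 0 < r → l z r ≤ 1 → ∀ x ∈ ball d z r,
      l z r ^ (-p x) ≤ F * l z r ^ (-p z) ∧ l z r ^ (-p z) ≤ F * l z r ^ (-p x) := by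
  obtain ⟨n, hn⟩ := doubling_pow d μ A₀ Cμ hX
  obtain ⟨K, hK, hosc⟩ := osc_log d μ A₀ Cμ hX x₀ p q hc.h0 hc.hi
  have hA := hX.one_le_A₀
  have hC := hc.hC
  set c := l x₀ 1 with hcdef
  have hcpos : 0 < c := hc.lpos x₀ 1 one_pos
  set M := K * |Real.log (C * C * 2 ^ n / c)| + n * K with hM
  refine ⟨Real.exp M, Real.one_le_exp (by positivity), fun z r hr hl1 x hx => ?_⟩
  have hlp := hc.lpos z r hr
  have hd := hX.d_nonneg z x₀
  set R := A₀ * (1 + r + d z x₀) with hR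
  have hrR : r ≤ R := by rw [hR]; nlinarith
  have hsub : ball d x₀ 1 ⊆ ball d z R := by
    intro y hy
    have hy' : d x₀ y < 1 := hy
    have := hX.d_triangle z y x₀
    show d z y < R
    rw [hR]
    have : A₀ * (d z x₀ + d x₀ y) < A₀ * (1 + r + d z x₀) := by
      apply mul_lt_mul_of_pos_left _ (by linarith)
      linarith
    linarith
  have h1 := hc.l_mono hX x₀ z 1 R one_pos (by linarith) hsub
  have h2 := hc.l_back hX n hn z r R hr hrR
  have hRr : 0 < R / r := div_pos (by linarith) hr
  have hinv : 1 / l z r ≤ (C * C * 2 ^ n / c) * (R / r) ^ n := by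
    rw [div_mul_eq_mul_div, div_le_div_iff₀ hlp hcpos, one_mul]
    calc c ≤ C * l z R := h1
      _ ≤ C * (C * (2 * (R / r)) ^ n * l z r) := by gcongr
      _ = _ := by rw [mul_pow]; ring
  have hlog : - Real.log (l z r) ≤ |Real.log (C * C * 2 ^ n / c)| + n * Real.log (R / r) := by
    have := Real.log_le_log (by positivity) hinv
    rw [one_div, Real.log_inv, Real.log_mul (by positivity) (by positivity), Real.log_pow] at this
    linarith [le_abs_self (Real.log (C * C * 2 ^ n / c))]
  have ⟨ho1, ho2⟩ := hosc z r hr x hx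
  have ho0 : 0 ≤ |p x - p z| := abs_nonneg _
  have hb : |p x - p z| * (- Real.log (l z r)) ≤ M := by
    calc _ ≤ |p x - p z| * (|Real.log (C * C * 2 ^ n / c)| + n * Real.log (R / r)) := by gcongr
      _ = |p x - p z| * |Real.log (C * C * 2 ^ n / c)| + n * (|p x - p z| * Real.log (R / r)) := by
          ring
      _ ≤ _ := by rw [hM]; gcongr
  have hl0 : 0 ≤ - Real.log (l z r) := by linarith [Real.log_nonpos hlp.le hl1]
  have key : ∀ u v : ℝ, u - v ≤ |p x - p z| → l z r ^ (-u) ≤ Real.exp M * l z r ^ (-v) := by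
    intro u v huv
    rw [Real.rpow_def_of_pos hlp, Real.rpow_def_of_pos hlp, ← Real.exp_add]
    apply Real.exp_le_exp.2
    nlinarith [mul_le_mul_of_nonneg_right huv hl0]
  exact ⟨key _ _ (le_abs_self _), key _ _ (by rw [abs_sub_comm]; exact le_abs_self _)⟩

lemma Core.main {d : X → X → ℝ} {μ : Measure X} {A₀ Cμ : ℝ} (hX : IsSHT d μ A₀ Cμ) {x₀ : X}
    {p : X → ℝ} {q P : ℝ} {W : X → ℝ≥0∞} {C : ℝ} {l : X → ℝ → ℝ}
    (hc : Core d μ x₀ p q P W C l) :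
    ∃ Q : ℝ, 0 < Q ∧ ∀ z r, 0 < r → ∫⁻ x in ball d z r, W x ∂μ ≠ ⊤ ∧
      ∀ E ⊆ ball d z r, MeasurableSet E → ∫⁻ x in E, W x ∂μ ≠ 0 →
      (μ E).toReal / (μ (ball d z r)).toReal ≤
        Q * ((∫⁻ x in E, W x ∂μ).toReal / (∫⁻ x in ball d z r, W x ∂μ).toReal) ^ (1 / P) := by
  obtain ⟨F, hF, hosc⟩ := hc.osc hX
  obtain ⟨G, hG, hinf⟩ := hc.infty hX
  have hC := hc.hC
  have hq := hc.hq1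
  have hqP := hc.hqP
  have hP : 1 ≤ P := hq.trans hqP
  have hP0 : 0 < P := by linarith
  have hq0 : 0 < q := by linarith
  have root_le : ∀ a u : ℝ, 1 ≤ a → 1 ≤ u → a ^ (1 / u) ≤ a := by
    intro a u ha hu
    calc a ^ (1 / u) ≤ a ^ (1 : ℝ) := by
          apply Real.rpow_le_rpow_of_exponent_le ha
          rw [div_le_one (by linarith)]; exact hu
      _ = a := Real.rpow_one a
  refine ⟨(1 + C) * (F * F) + C * G + C * G * G, by positivity, fun z r hr => ?_⟩
  have hlp := hc.lpos z r hr
  have hBt : ∫⁻ x in ball d z r, W x ∂μ ≠ ⊤ :=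
    ne_top_of_le_ne_top ENNReal.ofReal_ne_top
      (hc.W_le hX z r hr (max 1 (l z r)) (le_max_left _ _) (le_max_right _ _))
  refine ⟨hBt, fun E hEB hE hE0 => ?_⟩
  have hB := hX.measurableSet_ball z r
  have hmB := ball_toReal_pos d μ A₀ Cμ hX z r hr
  have hWEB : ∫⁻ x in E, W x ∂μ ≤ ∫⁻ x in ball d z r, W x ∂μ := lintegral_mono_set hEB
  have hEt := ne_top_of_le_ne_top hBt hWEB
  set e := (∫⁻ x in E, W x ∂μ).toReal with he
  set b := (∫⁻ x in ball d z r, W x ∂μ).toReal with hb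
  have heW : ∫⁻ x in E, W x ∂μ = ENNReal.ofReal e := (ENNReal.ofReal_toReal hEt).symm
  have hbW : ∫⁻ x in ball d z r, W x ∂μ = ENNReal.ofReal b := (ENNReal.ofReal_toReal hBt).symm
  have he0 : 0 < e := ENNReal.toReal_pos hE0 hEt
  have heb : e ≤ b := ENNReal.toReal_mono hBt hWEB
  have hb0 : 0 < b := by linarith
  have heb0 : 0 < e / b := by positivity
  have heb1 : e / b ≤ 1 := by rw [div_le_one hb0]; exact heb
  set y := (e / b) ^ (1 / P) with hy
  have hy0 : 0 < y := by positivity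
  have hratio : (μ E).toReal / (μ (ball d z r)).toReal ≤ 1 := by
    rw [div_le_one hmB]
    exact ENNReal.toReal_mono (hX.ball_ne_top z r hr) (measure_mono hEB)
  have hs : ∀ s, 0 < s → II μ W p E s ≤ 1 →
      (μ E).toReal / (μ (ball d z r)).toReal ≤ C * (s / l z r) := by
    intro s hs0 hI
    have := hc.hH z r hr E hEB hE s hs0 hI
    rw [div_le_iff₀ hmB, ← mul_div_assoc, div_mul_eq_mul_div, le_div_iff₀ hlp]
    linarith
  have T1 : 0 ≤ (1 + C) * (F * F) * y := by positivity
  have T2 : 0 ≤ C * G * y := by positivity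
  have T3 : 0 ≤ C * G * G * y := by positivity
  rw [add_mul, add_mul]
  rcases le_or_gt (l z r) 1 with hl1 | hl1
  · -- small norm
    suffices h : (μ E).toReal / (μ (ball d z r)).toReal ≤ (1 + C) * (F * F) * y by linarith
    set t := (F * F * (e / b)) ^ (1 / P) with ht
    have ht0 : 0 < t := by positivity
    have htP : t ^ P = F * F * (e / b) := by
      rw [ht, ← Real.rpow_mul (by positivity), one_div, inv_mul_cancel₀ hP0.ne', Real.rpow_one]
    have hty : t ≤ F * F * y := by
      rw [ht, Real.mul_rpow (by positivity) (by positivity)]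
      gcongr
      exact root_le _ _ (by nlinarith) hP
    rcases le_or_gt 1 t with ht1 | ht1
    · have : 0 ≤ C * (F * F * y) := by positivity
      nlinarith
    · have hbl : b ≤ F * l z r ^ p z := by
        have h1 := le_of_II μ W p _ hB (l z r) (F * l z r ^ p z) (by positivity) (by
          intro x hx
          have h2 := (hosc z r hr hl1 x hx).2
          rw [mul_inv, ← Real.rpow_neg hlp.le, inv_mul_le_iff₀ (by positivity)]
          exact h2) (hc.hl z r hr)
        rw [hbW] at h1
        exact (ENNReal.ofReal_le_ofReal_iff (by positivity)).1 h1
      have hI : II μ W p E (t * l z r) ≤ 1 := by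
        refine (II_le μ W p E hE _ ((t ^ P)⁻¹ * (F * l z r ^ (-p z))) ?_).trans ?_
        · intro x hx
          rw [Real.mul_rpow ht0.le hlp.le]
          have h3 : t ^ (-p x) ≤ (t ^ P)⁻¹ := by
            rw [← Real.rpow_neg ht0.le]
            apply Real.rpow_le_rpow_of_exponent_ge ht0 ht1.le
            linarith [hc.hpP x]
          have h4 := (hosc z r hr hl1 x (hEB hx)).1
          gcongr
        · rw [heW, ← ENNReal.ofReal_mul he0.le, ENNReal.ofReal_le_one, htP, Real.rpow_neg hlp.le]
          have hlpz : 0 < l z r ^ p z := by positivity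
          have : e * ((F * F * (e / b))⁻¹ * (F * (l z r ^ p z)⁻¹)) = b / (F * l z r ^ p z) := by
            field_simp
          rw [this, div_le_one (by positivity)]
          exact hbl
      have h5 := hs (t * l z r) (by positivity) hI
      rw [mul_div_cancel_right₀ _ hlp.ne'] at h5
      have : C * t ≤ C * (F * F * y) := by gcongr
      have : 0 ≤ F * F * y := by positivity
      nlinarith
  · -- large norm
    have hbl : b ≤ G * l z r ^ q := by
      have h1 := (hinf (l z r) hl1.le _ hB).1 (hc.hl z r hr)
      rw [hbW] at h1
      exact (ENNReal.ofReal_le_ofReal_iff (by positivity)).1 h1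
    rcases le_or_gt e 1 with he1 | he1
    · suffices h : (μ E).toReal / (μ (ball d z r)).toReal ≤ C * G * y by linarith
      set s := e ^ (1 / P) with hsdef
      have hs0 : 0 < s := by positivity
      have hs1 : s ≤ 1 := Real.rpow_le_one he0.le he1 (by positivity)
      have hsP : s ^ P = e := by
        rw [hsdef, ← Real.rpow_mul (by positivity), one_div, inv_mul_cancel₀ hP0.ne', Real.rpow_one]
      have hI : II μ W p E s ≤ 1 := by
        refine (II_le μ W p E hE _ (e⁻¹) ?_).trans ?_
        · intro x hx
          rw [← hsP, ← Real.rpow_neg hs0.le]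
          apply Real.rpow_le_rpow_of_exponent_ge hs0 hs1
          linarith [hc.hpP x]
        · rw [heW, ← ENNReal.ofReal_mul he0.le, mul_inv_cancel₀ he0.ne']; simp
      have h5 := hs s hs0 hI
      have hbG : b ^ (1 / P) ≤ G * l z r := by
        calc b ^ (1 / P) ≤ (G * l z r ^ q) ^ (1 / P) := by gcongr
          _ = G ^ (1 / P) * (l z r) ^ (q / P) := by
              rw [Real.mul_rpow (by positivity) (by positivity), ← Real.rpow_mul hlp.le]
              congr 2; ring
          _ ≤ G * l z r := by
              gcongr
              · exact root_le _ _ hG hP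
              · calc l z r ^ (q / P) ≤ l z r ^ (1 : ℝ) := by
                      apply Real.rpow_le_rpow_of_exponent_le hl1.le
                      rw [div_le_one hP0]; exact hqP
                  _ = _ := Real.rpow_one _
      refine h5.trans ?_
      rw [mul_assoc]
      gcongr
      have hye : y = s / b ^ (1 / P) := by rw [hy, Real.div_rpow he0.le hb0.le]
      rw [hye, ← mul_div_assoc, div_le_div_iff₀ hlp (by positivity)]
      calc s * b ^ (1 / P) ≤ s * (G * l z r) := by gcongr
        _ = _ := by ring
    · suffices h : (μ E).toReal / (μ (ball d z r)).toReal ≤ C * G * G * y by linarith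
      set a := e ^ (1 / q) with ha
      have ha1 : 1 ≤ a := Real.one_le_rpow he1.le (by positivity)
      have haq : a ^ q = e := by
        rw [ha, ← Real.rpow_mul (by positivity), one_div, inv_mul_cancel₀ hq0.ne', Real.rpow_one]
      have hI := (hinf a ha1 E hE).2 (by rw [haq, heW])
      have h5 := hs (G * a) (by positivity) hI
      have hbG : b ^ (1 / q) ≤ G * l z r := by
        calc b ^ (1 / q) ≤ (G * l z r ^ q) ^ (1 / q) := by gcongr
          _ = G ^ (1 / q) * l z r := by
              rw [Real.mul_rpow (by positivity) (by positivity), ← Real.rpow_mul hlp.le, one_div,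
                mul_inv_cancel₀ hq0.ne', Real.rpow_one]
          _ ≤ G * l z r := by
              gcongr
              exact root_le _ _ hG hq
      have hyq : (e / b) ^ (1 / q) ≤ y := by
        apply Real.rpow_le_rpow_of_exponent_ge heb0 heb1
        gcongr
      have hye : (e / b) ^ (1 / q) = a / b ^ (1 / q) := Real.div_rpow he0.le hb0.le _
      have h6 : a / l z r ≤ G * y := by
        calc a / l z r ≤ G * (a / b ^ (1 / q)) := by
              rw [← mul_div_assoc, div_le_div_iff₀ hlp (by positivity)]
              calc a * b ^ (1 / q) ≤ a * (G * l z r) := by gcongr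
                _ = _ := by ring
          _ ≤ G * y := by rw [← hye]; gcongr
      calc _ ≤ _ := h5
        _ = C * G * (a / l z r) := by ring
        _ ≤ C * G * (G * y) := by gcongr
        _ = _ := by ring

theorem weight_rpow_mem_AInfty
    {X : Type*} [MeasurableSpace X] (d : X → X → ℝ) (μ : Measure X) (A₀ Cμ : ℝ)
    (hX : IsSHT d μ A₀ Cμ) (x₀ : X)
    (p : X → ℝ) (hpmeas : Measurable p) (hp1 : ∀ x, 1 ≤ p x)
    (hLH : LH d x₀ p)
    (w : X → ℝ≥0∞) (hw : IsWeight d μ w) (hap : Apvar d μ (ofRealExp p) w) :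
    (∃ C : ℝ≥0, ∀ (z : X) (rad : ℝ), 0 < rad → ∀ E ⊆ ball d z rad, MeasurableSet E →
        μ E / μ (ball d z rad) ≤
          C * ((∫⁻ x in E, w x ^ p x ∂μ) /
              ∫⁻ x in ball d z rad, w x ^ p x ∂μ) ^ (1 / essSup p μ)) ∧
      AInfty d μ fun x => w x ^ p x := by
  obtain ⟨hwm, hwp, -⟩ := hw
  obtain ⟨hL0, pinf, hLi⟩ := hLH
  have hne : NeBot (ae μ) := by
    rw [ae_neBot]
    rintro rfl
    exact (hX.ball_pos x₀ 1 one_pos).ne' rfl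
  set P := essSup p μ with hPdef
  have hbd : IsBoundedUnder (· ≤ ·) (ae μ) p := by
    obtain ⟨Ci, hCi, hi⟩ := hLi
    refine ⟨pinf + Ci, ?_⟩
    rw [eventually_map]
    refine Eventually.of_forall fun x => ?_
    have h1 := (hi x).trans (div_le_self hCi.le (log_e_ge _ (hX.d_nonneg _ _)))
    linarith [le_abs_self (p x - pinf)]
  have hpP : ∀ᵐ x ∂μ, p x ≤ P := ae_le_essSup hbd
  have hP1 : 1 ≤ P := by
    obtain ⟨x, hx⟩ := hpP.exists
    exact (hp1 x).trans hx
  have hP0 : 0 < P := by linarith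
  set p' : X → ℝ := fun x => min (p x) P with hp'
  have hpp' : ∀ᵐ x ∂μ, p' x = p x := by
    filter_upwards [hpP] with x hx
    exact min_eq_left hx
  have hmin : ∀ a b : ℝ, |min a P - min b P| ≤ |a - b| := fun a b => by
    simpa using abs_min_sub_min_le_max a P b P
  have hmax : ∀ a b : ℝ, |max 1 a - max 1 b| ≤ |a - b| := fun a b => by
    simpa using abs_max_sub_max_le_max 1 a 1 b
  have hp'1 : ∀ x, 1 ≤ p' x := fun x => le_min (hp1 x) hP1
  set q : ℝ := max 1 (min pinf P) with hq
  have h0' : LH0 d p' := by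
    obtain ⟨C0, hC0, h0⟩ := hL0
    exact ⟨C0, hC0, fun x y h1 h2 => (hmin _ _).trans (h0 x y h1 h2)⟩
  have hi' : LHinf d x₀ p' q := by
    obtain ⟨Ci, hCi, hi⟩ := hLi
    refine ⟨Ci, hCi, fun x => le_trans ?_ (hi x)⟩
    have h1 : p' x = max 1 (min (p x) P) := (max_eq_right (hp'1 x)).symm
    rw [h1, hq]
    exact (hmax _ _).trans (hmin _ _)
  obtain ⟨C, hC, hH⟩ := key_H d μ A₀ Cμ hX p hpmeas hp1 w hwm hwp hap
  set W : X → ℝ≥0∞ := fun x => w x ^ p x with hW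
  have hII : ∀ (E : Set X) (s : ℝ), 0 < s →
      II μ W p' E s = ∫⁻ x in E, (w x / ENNReal.ofReal s) ^ p x ∂μ := by
    intro E s hs
    unfold II
    apply lintegral_congr_ae
    filter_upwards [ae_restrict_of_ae hpp'] with x hx
    rw [hx, div_eq_mul_inv, ENNReal.mul_rpow_of_nonneg _ _ (by linarith [hp1 x]),
      ENNReal.inv_rpow, ENNReal.ofReal_rpow_of_pos hs, Real.rpow_neg hs.le,
      ENNReal.ofReal_inv_of_pos (by positivity)]
  have hH' : ∀ z r, ∃ l : ℝ, 0 < r → 0 < l ∧ II μ W p' (ball d z r) l ≤ 1 ∧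
      ∀ E ⊆ ball d z r, MeasurableSet E → ∀ s : ℝ, 0 < s →
        II μ W p' E s ≤ 1 → (μ E).toReal * l ≤ C * (μ (ball d z r)).toReal * s := by
    intro z r
    by_cases hr : 0 < r
    · obtain ⟨l, hl0, hl1, hl2⟩ := hH z r hr
      refine ⟨l, fun _ => ⟨hl0, by rwa [hII _ _ hl0], fun E hE hEm s hs hI => ?_⟩⟩
      rw [hII _ _ hs] at hI
      exact hl2 E hE hEm s hs hI
    · exact ⟨0, fun h => absurd h hr⟩
  choose l hl using hH'
  have hcore : Core d μ x₀ p' q P W C l :=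
    { hp1 := hp'1
      hpP := fun x => min_le_right _ _
      hq1 := le_max_left _ _
      hqP := max_le hP1 (min_le_right _ _)
      h0 := h0'
      hi := hi'
      hC := hC
      lpos := fun z r hr => (hl z r hr).1
      hl := fun z r hr => (hl z r hr).2.1
      hH := fun z r hr => (hl z r hr).2.2 }
  obtain ⟨Q, hQ, hmain⟩ := hcore.main hX
  have key : ∀ (z : X) (rad : ℝ), 0 < rad → ∀ E ⊆ ball d z rad, MeasurableSet E →
      μ E / μ (ball d z rad) ≤ ((Q.toNNReal + 2 : ℝ≥0) : ℝ≥0∞) *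
        ((∫⁻ x in E, W x ∂μ) / ∫⁻ x in ball d z rad, W x ∂μ) ^ (1 / P) := by
    intro z r hr E hEB hE
    obtain ⟨hBt, hm⟩ := hmain z r hr
    by_cases hE0 : ∫⁻ x in E, W x ∂μ = 0
    · have hμ : μ E = 0 := by
        rw [lintegral_eq_zero_iff (hwm.pow hpmeas), EventuallyEq, ae_restrict_iff' hE] at hE0
        rw [measure_eq_zero_iff_ae_notMem]
        filter_upwards [hE0, hwp] with x hx hwx hxB
        have := hx hxB
        simp only [Pi.zero_apply] at this
        rw [ENNReal.rpow_eq_zero_iff] at this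
        rcases this with h | h
        · exact hwx.1.ne' h.1
        · exact hwx.2.ne h.1
      rw [hμ]; simp
    have h1 := hm E hEB hE hE0
    have hWEB : ∫⁻ x in E, W x ∂μ ≤ ∫⁻ x in ball d z r, W x ∂μ := lintegral_mono_set hEB
    have hEt := ne_top_of_le_ne_top hBt hWEB
    have hB0 : ∫⁻ x in ball d z r, W x ∂μ ≠ 0 := fun h => hE0 (le_zero_iff.1 (h ▸ hWEB))
    have hμB := hX.ball_ne_top z r hr
    have hμE : μ E ≠ ⊤ := ne_top_of_le_ne_top hμB (measure_mono hEB)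
    have hμBp := ball_toReal_pos d μ A₀ Cμ hX z r hr
    have hbp := ENNReal.toReal_pos hB0 hBt
    have h2 := ENNReal.ofReal_le_ofReal h1
    rw [ENNReal.ofReal_div_of_pos hμBp, ENNReal.ofReal_toReal hμB, ENNReal.ofReal_toReal hμE,
      ENNReal.ofReal_mul hQ.le, ← ENNReal.ofReal_rpow_of_nonneg (by positivity) (by positivity),
      ENNReal.ofReal_div_of_pos hbp, ENNReal.ofReal_toReal hBt, ENNReal.ofReal_toReal hEt] at h2
    refine h2.trans ?_
    gcongr
    exact (ENNReal.coe_le_coe.2 (le_self_add : Q.toNNReal ≤ Q.toNNReal + 2))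
  refine ⟨⟨Q.toNNReal + 2, key⟩, 1 / P, by positivity, Q.toNNReal + 2, ?_, key⟩
  calc (1 : ℝ≥0) < 2 := by norm_num
    _ ≤ _ := le_add_self

end SHT
end

section
/- Let (X,d,μ) be a space of homogeneous type, let p(·) be an exponent function with p(·) ∈ LH (with limit value p_∞), and let w ∈ A_{p(·)}. Then there exist constants c, C > 0 such that for every quasi-metric ball B with ‖w χ_B‖_{p(·)} ≥ 1, one has c·W(B)^{1/p_∞} ≤ ‖w χ_B‖_{p(·)} ≤ C·W(B)^{1/p_∞}, where W(B) = ∫_B w(x)^{p(x)} dμ. -/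
open MeasureTheory ENNReal NNReal Filter

namespace SHT

variable {X : Type*} [MeasurableSpace X]

lemma modular_mono (μ : Measure X) (q : X → ℝ≥0∞) {f g : X → ℝ≥0∞} (h : ∀ x, f x ≤ g x) :
    modular μ q f ≤ modular μ q g := by
  unfold modular
  refine add_le_add ?_ ?_
  · exact lintegral_mono fun x => ENNReal.rpow_le_rpow (h x) ENNReal.toReal_nonneg
  · exact essSup_mono_ae (ae_of_all _ h)

lemma luxNorm_mono (μ : Measure X) (q : X → ℝ≥0∞) {f g : X → ℝ≥0∞} (h : ∀ x, f x ≤ g x) :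
    luxNorm μ q f ≤ luxNorm μ q g := by
  unfold luxNorm
  refine sInf_le_sInf ?_
  rintro lam ⟨h0, h1⟩
  exact ⟨h0, (modular_mono μ q fun x => ENNReal.div_le_div_right (h x) _).trans h1⟩

lemma modular_scale (μ : Measure X) (q : X → ℝ≥0∞) (hq : ∀ x, 1 ≤ q x) (hqm : Measurable q)
    (f : X → ℝ≥0∞)
    (lam : ℝ≥0∞) (h0 : 0 < lam) (h1 : lam ≤ 1) :
    modular μ q f ≤ lam * modular μ q (fun x => f x / lam) := by
  have ht : lam ≠ ⊤ := ne_top_of_le_ne_top ENNReal.one_ne_top h1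
  unfold modular
  rw [mul_add]
  refine add_le_add ?_ ?_
  · rw [← lintegral_const_mul' _ _ ht]
    have hS : MeasurableSet {x | q x ≠ ⊤} := (hqm (measurableSet_singleton ⊤)).compl
    refine setLIntegral_mono' hS ?_
    intro x hx
    have hq1 : 1 ≤ (q x).toReal := by
      rw [← ENNReal.toReal_one]; exact ENNReal.toReal_mono hx (hq x)
    have e : f x = lam * (f x / lam) := (ENNReal.mul_div_cancel h0.ne' ht).symm
    calc f x ^ (q x).toReal = (lam * (f x / lam)) ^ (q x).toReal := by rw [← e]
      _ = lam ^ (q x).toReal * (f x / lam) ^ (q x).toReal :=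
          ENNReal.mul_rpow_of_nonneg _ _ (by linarith)
      _ ≤ lam * (f x / lam) ^ (q x).toReal := by
          gcongr
          calc lam ^ (q x).toReal ≤ lam ^ (1:ℝ) :=
                ENNReal.rpow_le_rpow_of_exponent_ge h1 hq1
            _ = lam := ENNReal.rpow_one _
  · rw [← ENNReal.essSup_const_mul]
    refine essSup_mono_ae (ae_of_all _ fun x => ?_)
    exact (ENNReal.mul_div_cancel h0.ne' ht).ge

lemma luxNorm_ne_zero (μ : Measure X) (q : X → ℝ≥0∞) (hq : ∀ x, 1 ≤ q x) (hqm : Measurable q)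
    (f : X → ℝ≥0∞) (hf : Measurable f) (hne : ¬ f =ᵐ[μ] 0) : luxNorm μ q f ≠ 0 := by
  intro h
  apply hne
  have hm : modular μ q f = 0 := by
    refine le_antisymm (le_of_forall_gt fun c hc => ?_) zero_le
    have hc' : luxNorm μ q f < min c 1 := by
      rw [h]; exact lt_min (by simpa using hc) one_pos
    obtain ⟨lam, ⟨h0, h1⟩, h2⟩ := sInf_lt_iff.1 hc'
    calc modular μ q f ≤ lam * modular μ q (fun x => f x / lam) :=
          modular_scale μ q hq hqm f lam h0 (h2.le.trans (min_le_right _ _))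
      _ ≤ lam * 1 := by gcongr
      _ = lam := mul_one _
      _ < c := h2.trans_le (min_le_left _ _)
  unfold modular at hm
  obtain ⟨ha, hb⟩ := add_eq_zero.1 hm
  have hS : MeasurableSet {x | q x = ⊤} := hqm (measurableSet_singleton _)
  rw [ENNReal.essSup_eq_zero_iff] at hb
  rw [lintegral_eq_zero_iff (by fun_prop)] at ha
  have hb' := (ae_restrict_iff' hS).1 hb
  have ha' := (ae_restrict_iff' hS.compl).1 ha
  filter_upwards [ha', hb'] with x h1 h2
  by_cases hx : q x = ⊤
  · exact h2 hx
  · have := h1 hx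
    simp only [Pi.zero_apply] at this ⊢
    have hq1 : 1 ≤ (q x).toReal := by
      rw [← ENNReal.toReal_one]; exact ENNReal.toReal_mono hx (hq x)
    exact (ENNReal.rpow_eq_zero_iff_of_pos (by linarith)).1 this

lemma modular_ofReal (μ : Measure X) (p : X → ℝ) (hp1 : ∀ x, 1 ≤ p x) (w : X → ℝ≥0∞)
    (B : Set X) (hB : MeasurableSet B) (s : ℝ) (hs : 0 < s) :
    modular μ (ofRealExp p) (fun x => B.indicator w x / ENNReal.ofReal s) =
      ∫⁻ x in B, w x ^ p x * ENNReal.ofReal (s ^ (-p x)) ∂μ := by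
  unfold modular ofRealExp
  simp only [ne_eq, ENNReal.ofReal_ne_top, not_false_eq_true, Set.ofPred_true, Set.ofPred_false,
    Measure.restrict_univ, Measure.restrict_empty, essSup_measure_zero]
  rw [← lintegral_indicator hB]
  simp only [bot_eq_zero', add_zero]
  refine lintegral_congr fun x => ?_
  have hp : 0 < p x := by linarith [hp1 x]
  rw [ENNReal.toReal_ofReal hp.le]
  by_cases hx : x ∈ B
  · simp only [Set.indicator_of_mem hx]
    rw [ENNReal.div_rpow_of_nonneg _ _ hp.le, ENNReal.ofReal_rpow_of_pos hs, Real.rpow_neg hs.le,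
      ENNReal.ofReal_inv_of_pos (Real.rpow_pos_of_pos hs _), div_eq_mul_inv]
  · simp [Set.indicator_of_notMem hx, hp]

lemma J_le_one (μ : Measure X) (p : X → ℝ) (hp1 : ∀ x, 1 ≤ p x) (w : X → ℝ≥0∞)
    (B : Set X) (hB : MeasurableSet B) (s : ℝ) (hs : 0 < s)
    (h : luxNorm μ (ofRealExp p) (B.indicator w) < ENNReal.ofReal s) :
    ∫⁻ x in B, w x ^ p x * ENNReal.ofReal (s ^ (-p x)) ∂μ ≤ 1 := by
  rw [← modular_ofReal μ p hp1 w B hB s hs]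
  obtain ⟨lam, ⟨h0, h1⟩, h2⟩ := sInf_lt_iff.1 h
  exact (modular_mono μ _ fun x => ENNReal.div_le_div_left h2.le _).trans h1

lemma one_le_J (μ : Measure X) (p : X → ℝ) (hp1 : ∀ x, 1 ≤ p x) (w : X → ℝ≥0∞)
    (B : Set X) (hB : MeasurableSet B) (s : ℝ) (hs : 0 < s)
    (h : ENNReal.ofReal s < luxNorm μ (ofRealExp p) (B.indicator w)) :
    1 ≤ ∫⁻ x in B, w x ^ p x * ENNReal.ofReal (s ^ (-p x)) ∂μ := by
  rw [← modular_ofReal μ p hp1 w B hB s hs]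
  by_contra! hc
  refine absurd ?_ (not_le.2 h)
  unfold luxNorm
  exact sInf_le ⟨ENNReal.ofReal_pos.2 hs, hc.le⟩

/-- comparison of weighted integrals -/
lemma J_comp (μ : Measure X) (v : X → ℝ≥0∞) (T : Set X) (hT : MeasurableSet T)
    (a b : X → ℝ) (k : ℝ) (hk : 0 ≤ k) (h : ∀ x ∈ T, a x ≤ k * b x) :
    ∫⁻ x in T, v x * ENNReal.ofReal (a x) ∂μ ≤
      ENNReal.ofReal k * ∫⁻ x in T, v x * ENNReal.ofReal (b x) ∂μ := by
  rw [← lintegral_const_mul' _ _ ENNReal.ofReal_ne_top]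
  refine setLIntegral_mono' hT fun x hx => ?_
  calc v x * ENNReal.ofReal (a x) ≤ v x * ENNReal.ofReal (k * b x) := by
        gcongr; exact h x hx
    _ = _ := by rw [ENNReal.ofReal_mul hk]; ring

lemma one_le_conjExp (p : X → ℝ) (hp1 : ∀ x, 1 ≤ p x) (x : X) : 1 ≤ conjExp (ofRealExp p) x := by
  unfold conjExp
  split_ifs with h
  · exact le_rfl
  · have hp : (1:ℝ≥0∞) ≤ ofRealExp p x := by
      unfold ofRealExp; simpa using hp1 x
    by_cases h1 : ofRealExp p x - 1 = 0
    · rw [h1, ENNReal.div_zero (by positivity)]; exact le_top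
    · rw [ENNReal.le_div_iff_mul_le (Or.inl h1) (Or.inl (by simp [h])), one_mul]
      exact tsub_le_self

lemma growth (d : X → X → ℝ) (μ : Measure X) (A₀ Cμ : ℝ)
    (hX : IsSHT d μ A₀ Cμ) (x₀ : X)
    (p : X → ℝ) (hpmeas : Measurable p) (hp1 : ∀ x, 1 ≤ p x)
    (w : X → ℝ≥0∞) (hw : IsWeight d μ w) (hap : Apvar d μ (ofRealExp p) w) :
    ∃ D : ℝ, 0 ≤ D ∧ ∀ n : ℕ,
      luxNorm μ (ofRealExp p) ((ball d x₀ (2 ^ n)).indicator w) ≤ ENNReal.ofReal (D * Cμ ^ n) := by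
  obtain ⟨K, hK⟩ := hap
  obtain ⟨hwm, hwa, -⟩ := hw
  have hC0 : 0 ≤ Cμ := by linarith [hX.one_le_Cμ]
  set N0 := luxNorm μ (conjExp (ofRealExp p)) ((ball d x₀ 1).indicator fun y => (w y)⁻¹) with hN0
  have hN : N0 ≠ 0 := by
    refine luxNorm_ne_zero μ _ (one_le_conjExp p hp1) ?_ _ ?_ ?_
    · unfold conjExp ofRealExp
      have h1 : Measurable fun x => ENNReal.ofReal (p x) := by fun_prop
      refine Measurable.ite (h1 (measurableSet_singleton _)) measurable_const ?_
      fun_prop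
    · exact (hwm.inv).indicator (hX.measurableSet_ball _ _)
    · intro h
      have hb := hX.ball_pos x₀ 1 one_pos
      have : μ (ball d x₀ 1) = 0 := by
        refine measure_mono_null (fun x hx => ?_) (ae_iff.1 (h.and hwa))
        simp only [Set.mem_ofPred_eq, Set.indicator_of_mem hx, Pi.zero_apply, not_and]
        intro h2 h3 h4
        rw [ENNReal.inv_eq_zero] at h2
        exact absurd h2 h4.ne
      exact hb.ne' this
  have hmu : ∀ n : ℕ, μ (ball d x₀ (2 ^ n)) ≤ ENNReal.ofReal (Cμ ^ n) * μ (ball d x₀ 1) := by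
    intro n
    induction n with
    | zero => simp
    | succ k ih =>
      rw [pow_succ', pow_succ', ENNReal.ofReal_mul hC0, mul_assoc]
      refine (hX.doubling _ _ (by positivity)).trans ?_
      gcongr
  have hfin : (K : ℝ≥0∞) * μ (ball d x₀ 1) / N0 ≠ ⊤ :=
    (ENNReal.div_lt_top (ENNReal.mul_ne_top ENNReal.coe_ne_top
      (hX.ball_ne_top _ _ one_pos)) hN).ne
  refine ⟨((K : ℝ≥0∞) * μ (ball d x₀ 1) / N0).toReal, ENNReal.toReal_nonneg, fun n => ?_⟩
  rw [ENNReal.ofReal_mul ENNReal.toReal_nonneg, ENNReal.ofReal_toReal hfin]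
  have h2n : (1:ℝ) ≤ 2 ^ n := one_le_pow₀ (by norm_num)
  have hle : N0 ≤ luxNorm μ (conjExp (ofRealExp p))
      ((ball d x₀ (2 ^ n)).indicator fun y => (w y)⁻¹) := by
    refine luxNorm_mono _ _ fun x => ?_
    refine Set.indicator_le_indicator_of_subset (fun y hy => lt_of_lt_of_le hy h2n)
      (fun _ => zero_le) x
  set L := luxNorm μ (ofRealExp p) ((ball d x₀ (2 ^ n)).indicator w)
  have h1 : L * N0 ≤ ENNReal.ofReal (Cμ ^ n) * (K * μ (ball d x₀ 1)) := by
    calc L * N0 ≤ K * μ (ball d x₀ (2 ^ n)) :=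
          le_trans (by gcongr) (hK x₀ (2 ^ n) (by positivity))
      _ ≤ K * (ENNReal.ofReal (Cμ ^ n) * μ (ball d x₀ 1)) := by gcongr; exact hmu n
      _ = _ := by ring
  have hR : ENNReal.ofReal (Cμ ^ n) * (K * μ (ball d x₀ 1)) ≠ ⊤ :=
    ENNReal.mul_ne_top ENNReal.ofReal_ne_top (ENNReal.mul_ne_top ENNReal.coe_ne_top
      (hX.ball_ne_top _ _ one_pos))
  calc L ≤ ENNReal.ofReal (Cμ ^ n) * (K * μ (ball d x₀ 1)) / N0 := by
        rw [ENNReal.le_div_iff_mul_le (Or.inl hN) (Or.inr hR)]; exact h1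
    _ = _ := by rw [mul_div_assoc, mul_comm]

lemma W_le (μ : Measure X) (p : X → ℝ) (hp1 : ∀ x, 1 ≤ p x) (P : ℝ) (hP : ∀ x, p x ≤ P)
    (w : X → ℝ≥0∞) (B : Set X) (hB : MeasurableSet B) (t : ℝ) (ht : 0 ≤ t)
    (h : luxNorm μ (ofRealExp p) (B.indicator w) ≤ ENNReal.ofReal t) :
    ∫⁻ x in B, w x ^ p x ∂μ ≤ ENNReal.ofReal ((1 + t) ^ P) := by
  have hs : 0 < 1 + t := by linarith
  have h1 := J_le_one μ p hp1 w B hB (1 + t) hs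
    (h.trans_lt ((ENNReal.ofReal_lt_ofReal_iff hs).2 (by linarith)))
  have h2 := J_comp μ (fun x => w x ^ p x) B hB (fun _ => 1) (fun x => (1 + t) ^ (-p x))
    ((1 + t) ^ P) (by positivity) (fun x _ => by
      rw [← Real.rpow_add hs]
      exact Real.one_le_rpow (by linarith) (by linarith [hP x]))
  simp only [ENNReal.ofReal_one, mul_one] at h2
  exact h2.trans (by simpa using mul_le_mul_right h1 (ENNReal.ofReal ((1 + t) ^ P)))

lemma J_bounds (μ : Measure X) (p : X → ℝ) (hp1 : ∀ x, 1 ≤ p x) (P : ℝ) (hP : ∀ x, p x ≤ P)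
    (w : X → ℝ≥0∞) (B : Set X) (hB : MeasurableSet B) (L : ℝ) (hL : 1 ≤ L)
    (h : luxNorm μ (ofRealExp p) (B.indicator w) = ENNReal.ofReal L) :
    1 ≤ ENNReal.ofReal (2 ^ P) * ∫⁻ x in B, w x ^ p x * ENNReal.ofReal (L ^ (-p x)) ∂μ ∧
    ∫⁻ x in B, w x ^ p x * ENNReal.ofReal (L ^ (-p x)) ∂μ ≤ ENNReal.ofReal (2 ^ P) := by
  have hL0 : 0 < L := by linarith
  constructor
  · have h1 := one_le_J μ p hp1 w B hB (L / 2) (by linarith)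
      (by rw [h]; exact (ENNReal.ofReal_lt_ofReal_iff hL0).2 (by linarith))
    refine h1.trans (J_comp μ (fun x => w x ^ p x) B hB _ _ _ (by positivity) fun x _ => ?_)
    rw [Real.div_rpow hL0.le (by norm_num), Real.rpow_neg (by norm_num : (0:ℝ) ≤ 2), div_inv_eq_mul,
      mul_comm]
    gcongr
    · norm_num
    · exact hP x
  · have h1 := J_le_one μ p hp1 w B hB (2 * L) (by linarith)
      (by rw [h]; exact (ENNReal.ofReal_lt_ofReal_iff (by linarith)).2 (by linarith))
    have h2 := J_comp μ (fun x => w x ^ p x) B hB (fun x => L ^ (-p x))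
      (fun x => (2 * L) ^ (-p x)) (2 ^ P) (by positivity) (fun x _ => by
        rw [Real.mul_rpow (by norm_num) hL0.le, ← mul_assoc, ← Real.rpow_add (by norm_num)]
        exact le_mul_of_one_le_left (by positivity)
          (Real.one_le_rpow (by norm_num) (by linarith [hP x])))
    exact h2.trans (by simpa using mul_le_mul_right h1 (ENNReal.ofReal (2 ^ P)))

/-- choice of the scale -/
lemma scale_choice (G : ℝ) (hG : 1 ≤ G) : ∃ k : ℝ, 0 < k ∧ ∀ L : ℝ, 1 ≤ L → ∃ n : ℕ,
    G ^ n ≤ L ^ (1 / 2 : ℝ) ∧ ∀ t : ℝ, 2 ^ n ≤ t → Real.log L ≤ k * Real.log (Real.exp 1 + t) := by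
  obtain ⟨m, hm⟩ := pow_unbounded_of_one_lt G (one_lt_two : (1:ℝ) < 2)
  have hl2 : 0 < Real.log 2 := Real.log_pos one_lt_two
  have hl2' : Real.log 2 < 1 := by linarith [Real.log_two_lt_d9]
  set M : ℝ := m + 1 with hM
  have hM1 : 1 ≤ M := by simp [hM]
  have hGM : Real.log G ≤ M * Real.log 2 := by
    have := Real.log_le_log (by linarith) hm.le
    rw [Real.log_pow] at this
    nlinarith
  refine ⟨4 * M, by positivity, fun L hL => ?_⟩
  have hlL : 0 ≤ Real.log L := Real.log_nonneg hL
  set y := Real.log L / (2 * M * Real.log 2) with hy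
  have hy0 : 0 ≤ y := by positivity
  have hyL : Real.log L = y * (2 * M * Real.log 2) := by rw [hy]; field_simp
  refine ⟨⌊y⌋₊, ?_, ?_⟩
  · have h1 : (⌊y⌋₊ : ℝ) ≤ y := Nat.floor_le hy0
    have hG0 : 0 < G := by linarith
    rw [← Real.log_le_log_iff (by positivity) (by positivity), Real.log_pow,
      Real.log_rpow (by linarith), hyL]
    calc (⌊y⌋₊ : ℝ) * Real.log G ≤ y * (M * Real.log 2) :=
          mul_le_mul h1 hGM (Real.log_nonneg hG) hy0
      _ = _ := by ring
  · intro t ht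
    have h1 : y < ⌊y⌋₊ + 1 := Nat.lt_floor_add_one y
    have h2n : (0:ℝ) < 2 ^ ⌊y⌋₊ := by positivity
    have he := Real.exp_pos 1
    have hA : 1 ≤ Real.log (Real.exp 1 + t) := by
      rw [Real.le_log_iff_exp_le (by linarith)]; linarith
    have hB : ⌊y⌋₊ * Real.log 2 ≤ Real.log (Real.exp 1 + t) := by
      rw [← Real.log_pow]
      exact Real.log_le_log h2n (by linarith)
    rw [hyL]
    have h3 : y * Real.log 2 ≤ 2 * Real.log (Real.exp 1 + t) := by nlinarith
    nlinarith

lemma core (d : X → X → ℝ) (μ : Measure X) (A₀ Cμ : ℝ)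
    (hX : IsSHT d μ A₀ Cμ) (x₀ : X)
    (p : X → ℝ) (hp1 : ∀ x, 1 ≤ p x) (P : ℝ) (hP : ∀ x, p x ≤ P)
    (pinf : ℝ) (hpinf : 1 ≤ pinf) (hLHinf : LHinf d x₀ p pinf)
    (w : X → ℝ≥0∞) (D : ℝ) (hD : 0 ≤ D)
    (hgr : ∀ n : ℕ, luxNorm μ (ofRealExp p) ((ball d x₀ (2 ^ n)).indicator w) ≤
      ENNReal.ofReal (D * Cμ ^ n)) :
    ∃ C1 C2 : ℝ, 0 < C1 ∧ 0 < C2 ∧ ∀ (B : Set X) (L : ℝ), MeasurableSet B → 1 ≤ L →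
      luxNorm μ (ofRealExp p) (B.indicator w) = ENNReal.ofReal L →
      ∃ i : ℝ, 0 ≤ i ∧ ∫⁻ x in B, w x ^ p x ∂μ = ENNReal.ofReal i ∧
        i ≤ C1 * L ^ pinf ∧ L ^ pinf ≤ C2 * i := by
  obtain ⟨Cinf, hCinf, hLH⟩ := hLHinf
  have hC1 := hX.one_le_Cμ
  have hP1 : 1 ≤ P := (hp1 x₀).trans (hP x₀)
  obtain ⟨k, hk, hscale⟩ := scale_choice (Cμ ^ P) (Real.one_le_rpow hC1 (by linarith))
  set E : ℝ := (1 + D) ^ P with hE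
  set A : ℝ := 2 ^ P with hA
  set H : ℝ := Real.exp (k * Cinf) with hH
  have hE0 : 0 < E := by positivity
  have hA0 : 0 < A := by positivity
  have hH0 : 0 < H := by positivity
  refine ⟨E + H * A, 2 * A * H + (2 * A * E) ^ (2 * pinf) * A, by positivity, by positivity, ?_⟩
  intro B L hB hL hlux
  have hL0 : 0 < L := by linarith
  obtain ⟨hJ1, hJ2⟩ := J_bounds μ p hp1 P hP w B hB L hL hlux
  obtain ⟨n, hn1, hn2⟩ := hscale L hL
  set S := ball d x₀ (2 ^ n) with hS
  have hSm : MeasurableSet S := hX.measurableSet_ball _ _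
  have hWS : ∫⁻ x in S, w x ^ p x ∂μ ≤ ENNReal.ofReal (E * L ^ (1 / 2 : ℝ)) := by
    refine (W_le μ p hp1 P hP w S hSm (D * Cμ ^ n) (by positivity) (hgr n)).trans ?_
    apply ENNReal.ofReal_le_ofReal
    have h1 : (1:ℝ) ≤ Cμ ^ n := one_le_pow₀ hC1
    calc (1 + D * Cμ ^ n) ^ P ≤ ((1 + D) * Cμ ^ n) ^ P := by
          apply Real.rpow_le_rpow (by positivity) (by nlinarith) (by linarith)
      _ = E * (Cμ ^ P) ^ n := by
          rw [Real.mul_rpow (by positivity) (by positivity), hE]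
          congr 1
          rw [← Real.rpow_natCast, ← Real.rpow_natCast, ← Real.rpow_mul (by linarith),
            ← Real.rpow_mul (by linarith), mul_comm]
      _ ≤ _ := by gcongr
  have habs : ∀ x ∈ B \ S, Real.log L * |p x - pinf| ≤ k * Cinf := by
    intro x hx
    have hd : 2 ^ n ≤ d x x₀ := by
      have := hx.2
      rw [hS, ball] at this
      rw [hX.d_symm]
      simpa using this
    have h1 := hn2 _ hd
    have h2 : (1:ℝ) ≤ Real.log (Real.exp 1 + d x x₀) := by
      have := hX.d_nonneg x x₀
      rw [Real.le_log_iff_exp_le (by positivity)]; linarith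
    calc Real.log L * |p x - pinf| ≤
        (k * Real.log (Real.exp 1 + d x x₀)) * (Cinf / Real.log (Real.exp 1 + d x x₀)) :=
          mul_le_mul h1 (hLH x) (abs_nonneg _) (by positivity)
      _ = k * Cinf := by field_simp
  have hpw : ∀ x ∈ B \ S, L ^ (p x - pinf) ≤ H ∧ L ^ (pinf - p x) ≤ H := by
    intro x hx
    have h1 := habs x hx
    have hl : 0 ≤ Real.log L := Real.log_nonneg hL
    rw [Real.rpow_def_of_pos hL0, Real.rpow_def_of_pos hL0, hH, Real.exp_le_exp, Real.exp_le_exp]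
    constructor
    · exact le_trans (by gcongr; exact le_abs_self _) h1
    · refine le_trans ?_ h1
      gcongr; rw [abs_sub_comm]; exact le_abs_self _
  have hsplitI := lintegral_inter_add_sdiff (μ := μ) (fun x => w x ^ p x) B hSm
  have hsplitJ := lintegral_inter_add_sdiff (μ := μ)
    (fun x => w x ^ p x * ENNReal.ofReal (L ^ (-p x))) B hSm
  have hBS : ∫⁻ x in B ∩ S, w x ^ p x ∂μ ≤ ENNReal.ofReal (E * L ^ (1 / 2 : ℝ)) :=
    (lintegral_mono_set Set.inter_subset_right).trans hWS
  have hdm : MeasurableSet (B \ S) := hB.diff hSm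
  -- fact 1
  have f1 : ∀ T : Set X, MeasurableSet T →
      ∫⁻ x in T, w x ^ p x * ENNReal.ofReal (L ^ (-p x)) ∂μ ≤
        ENNReal.ofReal (L⁻¹) * ∫⁻ x in T, w x ^ p x ∂μ := by
    intro T hT
    have := J_comp μ (fun x => w x ^ p x) T hT (fun x => L ^ (-p x)) (fun _ => 1) (L⁻¹)
      (by positivity) (fun x _ => by
        rw [mul_one, ← Real.rpow_neg_one]
        exact Real.rpow_le_rpow_of_exponent_le hL (by linarith [hp1 x]))
    simpa using this
  have f2 : ∫⁻ x in B \ S, w x ^ p x * ENNReal.ofReal (L ^ (-p x)) ∂μ ≤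
        ENNReal.ofReal (H * L ^ (-pinf)) * ∫⁻ x in B \ S, w x ^ p x ∂μ := by
    have := J_comp μ (fun x => w x ^ p x) (B \ S) hdm (fun x => L ^ (-p x)) (fun _ => 1)
      (H * L ^ (-pinf))
      (by positivity) (fun x hx => by
        rw [mul_one]
        calc L ^ (-p x) = L ^ (pinf - p x) * L ^ (-pinf) := by
              rw [← Real.rpow_add hL0]; congr 1; ring
          _ ≤ _ := by gcongr; exact (hpw x hx).2)
    simpa using this
  have f3 : ∫⁻ x in B \ S, w x ^ p x ∂μ ≤ ENNReal.ofReal (H * L ^ pinf) *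
      ∫⁻ x in B \ S, w x ^ p x * ENNReal.ofReal (L ^ (-p x)) ∂μ := by
    have := J_comp μ (fun x => w x ^ p x) (B \ S) hdm (fun _ => 1) (fun x => L ^ (-p x))
      (H * L ^ pinf)
      (by positivity) (fun x hx => by
        calc (1:ℝ) = L ^ (p x - pinf) * L ^ pinf * L ^ (-p x) := by
              rw [← Real.rpow_add hL0, ← Real.rpow_add hL0]; ring_nf; simp
          _ ≤ _ := by gcongr; exact (hpw x hx).1)
    simpa using this
  have hup : ∫⁻ x in B, w x ^ p x ∂μ ≤ ENNReal.ofReal ((E + H * A) * L ^ pinf) := by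
    rw [← hsplitI]
    calc _ ≤ ENNReal.ofReal (E * L ^ (1 / 2 : ℝ)) + ENNReal.ofReal (H * L ^ pinf) *
            ENNReal.ofReal A := by
          refine add_le_add hBS (f3.trans ?_)
          gcongr
          exact (lintegral_mono_set Set.diff_subset).trans hJ2
      _ = ENNReal.ofReal (E * L ^ (1 / 2 : ℝ) + H * L ^ pinf * A) := by
          rw [← ENNReal.ofReal_mul (by positivity), ← ENNReal.ofReal_add (by positivity)
            (by positivity)]
      _ ≤ _ := by
          apply ENNReal.ofReal_le_ofReal
          have : L ^ (1 / 2 : ℝ) ≤ L ^ pinf :=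
            Real.rpow_le_rpow_of_exponent_le hL (by linarith)
          nlinarith
  have hfin := ne_top_of_le_ne_top ENNReal.ofReal_ne_top hup
  obtain ⟨i, hi0, hi⟩ : ∃ i : ℝ, 0 ≤ i ∧ ∫⁻ x in B, w x ^ p x ∂μ = ENNReal.ofReal i :=
    ⟨_, ENNReal.toReal_nonneg, (ENNReal.ofReal_toReal hfin).symm⟩
  refine ⟨i, hi0, hi, ?_, ?_⟩
  · rw [hi] at hup
    exact (ENNReal.ofReal_le_ofReal_iff (by positivity)).1 hup
  -- lower bound
  have g1 : 1 ≤ A * (L⁻¹ * i) := by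
    have : (1:ℝ≥0∞) ≤ ENNReal.ofReal (A * (L⁻¹ * i)) := by
      rw [ENNReal.ofReal_mul hA0.le, ENNReal.ofReal_mul (by positivity), ← hi]
      refine hJ1.trans ?_
      gcongr
      exact f1 B hB
    simpa using this
  have g2 : 1 ≤ A * (L⁻¹ * (E * L ^ (1 / 2 : ℝ)) + H * L ^ (-pinf) * i) := by
    have : (1:ℝ≥0∞) ≤
        ENNReal.ofReal (A * (L⁻¹ * (E * L ^ (1 / 2 : ℝ)) + H * L ^ (-pinf) * i)) := by
      rw [ENNReal.ofReal_mul hA0.le, ENNReal.ofReal_add (by positivity) (by positivity),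
        ENNReal.ofReal_mul (p := L⁻¹) (by positivity),
        ENNReal.ofReal_mul (p := H * L ^ (-pinf)) (by positivity), ← hi]
      refine hJ1.trans ?_
      rw [← hsplitJ]
      gcongr
      · exact (f1 _ (hB.inter hSm)).trans (by gcongr)
      · exact f2.trans (by gcongr; exact Set.diff_subset)
    simpa using this
  set q := L ^ (1 / 2 : ℝ) with hq
  have hq0 : 0 < q := by positivity
  have hqq : L = q * q := by
    rw [hq, ← Real.rpow_add hL0]; norm_num
  have hLp : 0 < L ^ pinf := by positivity
  rcases le_or_gt (2 * A * E) q with hc | hc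
  · have e1 : A * (L⁻¹ * (E * q)) ≤ 1 / 2 := by
      have : A * (L⁻¹ * (E * q)) = A * E / q := by rw [hqq]; field_simp
      rw [this, div_le_iff₀ hq0]; linarith
    have e2 : 1 / 2 ≤ A * H * i / L ^ pinf := by
      have : A * (H * L ^ (-pinf) * i) = A * H * i / L ^ pinf := by
        rw [Real.rpow_neg hL0.le]; field_simp
      linarith
    rw [le_div_iff₀ hLp] at e2
    have : 0 ≤ (2 * A * E) ^ (2 * pinf) * A * i := by positivity
    nlinarith
  · have e1 : L ^ pinf ≤ (2 * A * E) ^ (2 * pinf) := by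
      have : L ^ pinf = q ^ (2 * pinf) := by
        rw [hq, ← Real.rpow_mul hL0.le]; congr 1; ring
      rw [this]
      exact Real.rpow_le_rpow hq0.le hc.le (by linarith)
    have e2 : 1 ≤ A * i := by
      refine g1.trans ?_
      gcongr
      exact mul_le_of_le_one_left hi0 (inv_le_one_of_one_le₀ hL)
    have e3 : 0 ≤ 2 * A * H * i := by positivity
    calc L ^ pinf ≤ (2 * A * E) ^ (2 * pinf) * 1 := by linarith
      _ ≤ (2 * A * E) ^ (2 * pinf) * (A * i) := by gcongr
      _ ≤ _ := by linarith

theorem luxNorm_eq_W_rpow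
    {X : Type*} [MeasurableSpace X] (d : X → X → ℝ) (μ : Measure X) (A₀ Cμ : ℝ)
    (hX : IsSHT d μ A₀ Cμ) (x₀ : X)
    (p : X → ℝ) (hpmeas : Measurable p) (hp1 : ∀ x, 1 ≤ p x)
    (pinf : ℝ) (hLH0 : LH0 d p) (hLHinf : LHinf d x₀ p pinf)
    (w : X → ℝ≥0∞) (hw : IsWeight d μ w) (hap : Apvar d μ (ofRealExp p) w) :
    ∃ c C : ℝ≥0, 0 < c ∧ 0 < C ∧ ∀ (z : X) (rad : ℝ), 0 < rad →
      1 ≤ luxNorm μ (ofRealExp p) ((ball d z rad).indicator w) →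
      c * (∫⁻ x in ball d z rad, w x ^ p x ∂μ) ^ (1 / pinf) ≤
          luxNorm μ (ofRealExp p) ((ball d z rad).indicator w) ∧
        luxNorm μ (ofRealExp p) ((ball d z rad).indicator w) ≤
          C * (∫⁻ x in ball d z rad, w x ^ p x ∂μ) ^ (1 / pinf) := by
  classical
  obtain ⟨Cinf, hCinf, hLH⟩ := id hLHinf
  have hlog : ∀ x, (1:ℝ) ≤ Real.log (Real.exp 1 + d x x₀) := fun x => by
    have := hX.d_nonneg x x₀
    rw [Real.le_log_iff_exp_le (by positivity)]; linarith
  have hP : ∀ x, p x ≤ pinf + Cinf := by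
    intro x
    have h1 := (le_abs_self _).trans (hLH x)
    have h2 : Cinf / Real.log (Real.exp 1 + d x x₀) ≤ Cinf := div_le_self hCinf.le (hlog x)
    linarith
  set P := pinf + Cinf with hPdef
  obtain ⟨D, hD, hgr⟩ := growth d μ A₀ Cμ hX x₀ p hpmeas hp1 w hw hap
  have hC1 := hX.one_le_Cμ
  -- balls are contained in balls about the base point
  have hsub : ∀ (z : X) (rad : ℝ), 0 < rad → ∃ n : ℕ, ball d z rad ⊆ ball d x₀ (2 ^ n) := by
    intro z rad _
    obtain ⟨n, hn⟩ := pow_unbounded_of_one_lt (A₀ * (d x₀ z + rad)) (one_lt_two : (1:ℝ) < 2)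
    refine ⟨n, fun y hy => ?_⟩
    have hy' : d z y < rad := hy
    have hA := hX.one_le_A₀
    show d x₀ y < 2 ^ n
    refine lt_of_le_of_lt ((hX.d_triangle x₀ y z).trans ?_) hn
    gcongr
  have hlt : ∀ (z : X) (rad : ℝ) (n : ℕ), ball d z rad ⊆ ball d x₀ (2 ^ n) →
      luxNorm μ (ofRealExp p) ((ball d z rad).indicator w) ≤ ENNReal.ofReal (D * Cμ ^ n) :=
    fun z rad n h => (luxNorm_mono _ _ (fun x =>
      Set.indicator_le_indicator_of_subset h (fun _ => zero_le) x)).trans (hgr n)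
  rcases le_or_gt 1 pinf with hpinf | hpinf
  · obtain ⟨C1, C2, h1, h2, hcore⟩ :=
      core d μ A₀ Cμ hX x₀ p hp1 P hP pinf hpinf hLHinf w D hD hgr
    have hpi : 0 < pinf := by linarith
    refine ⟨((C1 ^ (1 / pinf))⁻¹).toNNReal, (C2 ^ (1 / pinf)).toNNReal,
      Real.toNNReal_pos.2 (by positivity), Real.toNNReal_pos.2 (by positivity), ?_⟩
    intro z rad hrad hone
    obtain ⟨n, hn⟩ := hsub z rad hrad
    have hfin := ne_top_of_le_ne_top ENNReal.ofReal_ne_top (hlt z rad n hn)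
    set N := luxNorm μ (ofRealExp p) ((ball d z rad).indicator w) with hN
    have hNL : N = ENNReal.ofReal N.toReal := (ENNReal.ofReal_toReal hfin).symm
    have hL : 1 ≤ N.toReal := by
      rw [← ENNReal.toReal_one]; exact ENNReal.toReal_mono hfin hone
    obtain ⟨i, hi0, hi, hi1, hi2⟩ := hcore (ball d z rad) N.toReal
      (hX.measurableSet_ball _ _) hL (hN ▸ hNL)
    set L := N.toReal with hLdef
    have hL0 : 0 < L := by linarith
    rw [hi, hNL, ENNReal.ofReal_rpow_of_nonneg hi0 (by positivity)]
    change ENNReal.ofReal _ * _ ≤ _ ∧ _ ≤ ENNReal.ofReal _ * _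
    rw [← ENNReal.ofReal_mul (by positivity), ← ENNReal.ofReal_mul (by positivity)]
    have hLL : (L ^ pinf) ^ (1 / pinf) = L := by
      rw [← Real.rpow_mul hL0.le, mul_one_div_cancel hpi.ne', Real.rpow_one]
    constructor <;> apply ENNReal.ofReal_le_ofReal
    · rw [inv_mul_le_iff₀ (by positivity)]
      calc i ^ (1 / pinf) ≤ (C1 * L ^ pinf) ^ (1 / pinf) :=
            Real.rpow_le_rpow hi0 hi1 (by positivity)
        _ = C1 ^ (1 / pinf) * L := by rw [Real.mul_rpow h1.le (by positivity), hLL]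
    · calc L = (L ^ pinf) ^ (1 / pinf) := hLL.symm
        _ ≤ (C2 * i) ^ (1 / pinf) := Real.rpow_le_rpow (by positivity) hi2 (by positivity)
        _ = _ := Real.mul_rpow h2.le hi0
  · -- here the space is bounded
    obtain ⟨n, hn⟩ := pow_unbounded_of_one_lt (Real.exp (Cinf / (1 - pinf)))
      (one_lt_two : (1:ℝ) < 2)
    have huniv : ∀ s : Set X, s ⊆ ball d x₀ (2 ^ n) := by
      intro s x _
      show d x₀ x < 2 ^ n
      have h1 := (le_abs_self _).trans (hLH x)
      have h0 : 0 < Real.log (Real.exp 1 + d x x₀) := by linarith [hlog x]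
      have hdn := hX.d_nonneg x x₀
      have h2 : Real.log (Real.exp 1 + d x x₀) ≤ Cinf / (1 - pinf) := by
        rw [le_div_iff₀ (by linarith)]
        rw [le_div_iff₀ h0] at h1
        nlinarith [hp1 x]
      rw [Real.log_le_iff_le_exp (by positivity)] at h2
      rw [hX.d_symm]
      linarith [Real.exp_pos 1]
    set t := D * Cμ ^ n with ht
    have ht0 : 0 ≤ t := by positivity
    set e := 1 / pinf with he
    have hW : ∀ z rad, ∫⁻ x in ball d z rad, w x ^ p x ∂μ ≤ ENNReal.ofReal ((1 + t) ^ P) :=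
      fun z rad => W_le μ p hp1 P hP w _ (hX.measurableSet_ball _ _) t ht0
        (hlt z rad n (huniv _))
    set a : ℝ := (2 ^ P)⁻¹ with ha
    set b : ℝ := (1 + t) ^ P with hb
    have ha0 : 0 < a := by positivity
    have hb0 : 0 < b := by positivity
    refine ⟨((a ^ e + b ^ e)⁻¹).toNNReal, ((1 + t) * (a ^ (-e) + b ^ (-e))).toNNReal,
      Real.toNNReal_pos.2 (by positivity), Real.toNNReal_pos.2 (by positivity), ?_⟩
    intro z rad hrad hone
    have hle := hlt z rad n (huniv _)
    have hfin := ne_top_of_le_ne_top ENNReal.ofReal_ne_top hle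
    set N := luxNorm μ (ofRealExp p) ((ball d z rad).indicator w) with hN
    have hNL : N = ENNReal.ofReal N.toReal := (ENNReal.ofReal_toReal hfin).symm
    have hL : 1 ≤ N.toReal := by
      rw [← ENNReal.toReal_one]; exact ENNReal.toReal_mono hfin hone
    have hJ := (J_bounds μ p hp1 P hP w (ball d z rad) (hX.measurableSet_ball _ _) N.toReal hL
      (hN ▸ hNL)).1
    set L := N.toReal with hLdef
    have hL0 : 0 < L := by linarith
    have hLt : L ≤ t := by
      rw [hNL] at hle
      exact (ENNReal.ofReal_le_ofReal_iff ht0).1 hle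
    have hWf := ne_top_of_le_ne_top ENNReal.ofReal_ne_top (hW z rad)
    obtain ⟨i, hi0, hi⟩ : ∃ i : ℝ, 0 ≤ i ∧
        ∫⁻ x in ball d z rad, w x ^ p x ∂μ = ENNReal.ofReal i :=
      ⟨_, ENNReal.toReal_nonneg, (ENNReal.ofReal_toReal hWf).symm⟩
    have hib : i ≤ b := by
      have := hW z rad
      rw [hi] at this
      exact (ENNReal.ofReal_le_ofReal_iff hb0.le).1 this
    have hia : a ≤ i := by
      have h1 : (1:ℝ≥0∞) ≤ ENNReal.ofReal (2 ^ P * i) := by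
        rw [ENNReal.ofReal_mul (by positivity), ← hi]
        refine hJ.trans ?_
        gcongr with x
        refine mul_le_of_le_one_right zero_le ?_
        rw [ENNReal.ofReal_le_one]
        exact Real.rpow_le_one_of_one_le_of_nonpos hL (by linarith [hp1 x])
      have h2 : 1 ≤ 2 ^ P * i := by simpa using h1
      rw [ha, inv_le_iff_one_le_mul₀' (by positivity)]
      exact h2
    have hi1 : 0 < i := by linarith
    have hmax : ∀ e : ℝ, i ^ e ≤ a ^ e + b ^ e := by
      intro e
      have h1 : 0 < a ^ e := by positivity
      have h2 : 0 < b ^ e := by positivity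
      rcases le_total 0 e with h | h
      · linarith [Real.rpow_le_rpow hi0 hib h]
      · linarith [Real.rpow_le_rpow_of_nonpos ha0 hia h]
    rw [hi, hNL, ENNReal.ofReal_rpow_of_pos hi1]
    change ENNReal.ofReal _ * _ ≤ _ ∧ _ ≤ ENNReal.ofReal _ * _
    rw [← ENNReal.ofReal_mul (by positivity), ← ENNReal.ofReal_mul (by positivity)]
    constructor <;> apply ENNReal.ofReal_le_ofReal
    · rw [inv_mul_le_iff₀ (by positivity)]
      have := hmax e
      have h3 : 0 < a ^ e + b ^ e := by positivity
      nlinarith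
    · have h1 := hmax (-e)
      have h2 : i ^ (-e) * i ^ e = 1 := by
        rw [← Real.rpow_add hi1]; simp
      have h3 : 0 < i ^ e := by positivity
      calc L ≤ (1 + t) * (i ^ (-e) * i ^ e) := by rw [h2]; linarith
        _ ≤ (1 + t) * ((a ^ (-e) + b ^ (-e)) * i ^ e) := by gcongr
        _ = _ := by ring

end SHT
end
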